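/- arXiv:math-ph/0504075 — 6 statements merged into one kernel-verified Lean document; each statement's English description precedes it below -/
import Mathlib

section
/- Fix real numbers t, r with 0 < t < 1, 0 < r < 1 and r² + t² = 1, and assume the topological support of ν has nonempty interior. Then for every α ∈ ℝ the Lyapunov exponent γ(e^{iα}) = lim_{k→∞} (1/k) 𝔼_ℙ[ log ‖Φ(k,·)‖ ] exists and is strictly positive. -/
open MeasureTheory Complex Filter

noncomputable section
attribute [local instance] Matrix.normedAddCommGroup

instance : Fact (0 < 2 * Real.pi) := ⟨by positivity⟩

/-- The torus `𝕋 = ℝ/2πℤ`. -/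
abbrev Torus : Type := AddCircle (2 * Real.pi)

/-- `ec a = e^{ia}` for `a ∈ 𝕋`. -/
def ec (a : Torus) : ℂ := (AddCircle.toCircle a : ℂ)

/-- The topological support of a measure. -/
def measSupport (ν : Measure Torus) : Set Torus := {x | ∀ s ∈ nhds x, 0 < ν s}

/-- The transfer matrix `T(θ,η)`, with phases in the torus. -/
def TmatA (t r : ℝ) (θ η : Torus) : Matrix (Fin 2) (Fin 2) ℂ :=
  !![-ec (-η), (r/t : ℝ) * (ec (θ - η) - ec (-η));
     (r/t : ℝ) * (1 - ec (-η)),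
     -(1/t^2 : ℝ) * ec θ + (r^2/t^2 : ℝ) * (ec (θ - η) + 1 - ec (-η))]

/-- The transfer matrix cocycle
`Φ(k,ω) = T(θ_{2(k-1)}+α, θ_{2k-1}+α) ⋯ T(θ_0+α, θ_1+α)`, `Φ(0,ω) = I`. -/
def Phi (t r α : ℝ) (ω : ℤ → Torus) : ℕ → Matrix (Fin 2) (Fin 2) ℂ
  | 0 => 1
  | (k+1) => TmatA t r (ω (2*k) + (α : Torus)) (ω (2*k+1) + (α : Torus)) * Phi t r α ω k

/-!
Matrices whose determinant has modulus one preserve Lebesgue measure on `ℂ ^ d`, hence act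
isometrically on `L²`. The transfer matrix is the product of a lower and an upper triangular one,
each carrying one of the two independent phases, and each multiplies a bounded function on `ℂ²`, its
weight, by that phase. If averaging over a phase nearly preserves the norm of some `F`, then the
translates of `F` nearly agree, so the mean of the weight against the density `F²`, which rotates
with the phase, is nearly zero; the same holds for the square of the weight. A pointwise inequality
between the two weights and their squares makes it impossible for all these means to be small, so
the averaged operator contracts by some `q < 1`. Pairing with the indicator of the unit ball turns
this contraction into `𝔼[(d ‖Φ(k)‖) ^ (-2 d)] ≤ q ^ k`; Jensen's inequality gives a linear lower
bound for `𝔼[log ‖Φ(k)‖]`, and Fekete's lemma gives the limit.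
-/

open scoped InnerProductSpace ENNReal Topology ComplexConjugate

section KoopmanMean

theorem integral_norm_sub_sq {Z E : Type*} [MeasurableSpace Z] {ν : Measure Z}
    [IsProbabilityMeasure ν] [NormedAddCommGroup E] [InnerProductSpace ℝ E] [CompleteSpace E]
    {f : Z → E} (hf : MemLp f 2 ν) (c : E) :
    ∫ z, ‖f z - c‖ ^ 2 ∂ν
      = ∫ z, ‖f z‖ ^ 2 ∂ν - ‖∫ z, f z ∂ν‖ ^ 2 + ‖(∫ z, f z ∂ν) - c‖ ^ 2 := by
  have hf1 : Integrable f ν := hf.integrable one_le_two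
  have hsq : Integrable (fun z => ‖f z‖ ^ 2) ν := hf.integrable_norm_pow two_ne_zero
  have hinner : Integrable (fun z => 2 * ⟪f z, c⟫_ℝ) ν := (hf1.inner_const c).const_mul 2
  have hmean : ∫ z, ⟪f z, c⟫_ℝ ∂ν = ⟪∫ z, f z ∂ν, c⟫_ℝ := by
    simpa only [real_inner_comm] using integral_inner hf1 c
  calc ∫ z, ‖f z - c‖ ^ 2 ∂ν
      = ∫ z, ‖f z‖ ^ 2 ∂ν - 2 * ⟪∫ z, f z ∂ν, c⟫_ℝ + ‖c‖ ^ 2 := by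
        simp only [norm_sub_sq_real]
        rw [integral_add (f := fun z => ‖f z‖ ^ 2 - 2 * ⟪f z, c⟫_ℝ) (hsq.sub hinner)
          (integrable_const _), integral_sub hsq hinner, integral_const_mul, hmean,
          integral_const, probReal_univ, one_smul]
    _ = ∫ z, ‖f z‖ ^ 2 ∂ν - ‖∫ z, f z ∂ν‖ ^ 2 + ‖(∫ z, f z ∂ν) - c‖ ^ 2 := by
        rw [norm_sub_sq_real]; ring

variable {X Z G : Type*} [MeasurableSpace X] {μ : Measure X}
  [Monoid G] [MulAction G X] [SMulInvariantMeasure G X μ] [MeasurableConstSMul G X]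

theorem continuous_mk_smul [TopologicalSpace G] [ContinuousSMul Gᵈᵐᵃ (Lp ℝ 2 μ)]
    [TopologicalSpace Z] {g : Z → G} (hg : Continuous g) (F : Lp ℝ 2 μ) :
    Continuous fun z => DomMulAct.mk (g z) • F :=
  (DomMulAct.continuous_mk.comp hg).smul continuous_const

variable [MeasurableSpace Z] (ν : Measure Z)

/-- The average over `ν` of the Koopman operators `F ↦ F ∘ (g z • ·)` on `L²(μ)`. -/
def koopmanMean (g : Z → G) (F : Lp ℝ 2 μ) : Lp ℝ 2 μ := ∫ z, DomMulAct.mk (g z) • F ∂ν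

variable [IsProbabilityMeasure ν]

theorem norm_koopmanMean_le (g : Z → G) (F : Lp ℝ 2 μ) : ‖koopmanMean ν g F‖ ≤ ‖F‖ := by
  simpa [koopmanMean] using norm_integral_le_of_norm_le_const (μ := ν)
    (ae_of_all _ fun z => (DomMulAct.norm_smul_Lp (DomMulAct.mk (g z)) F).le)

variable [TopologicalSpace G] [ContinuousSMul Gᵈᵐᵃ (Lp ℝ 2 μ)] [TopologicalSpace Z] {g : Z → G}
  [CompactSpace Z] [OpensMeasurableSpace Z]

theorem integral_norm_smul_sub_koopmanMean_sq (hg : Continuous g) (F : Lp ℝ 2 μ) :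
    ∫ z, ‖DomMulAct.mk (g z) • F - koopmanMean ν g F‖ ^ 2 ∂ν
      = ‖F‖ ^ 2 - ‖koopmanMean ν g F‖ ^ 2 := by
  have hLp : MemLp (fun z => DomMulAct.mk (g z) • F) 2 ν :=
    (continuous_mk_smul hg F).memLp_of_hasCompactSupport (.of_compactSpace _)
  simpa [koopmanMean] using integral_norm_sub_sq hLp (koopmanMean ν g F)

end KoopmanMean

section WeightedMean

variable {X G : Type*} [MeasurableSpace X] {μ : Measure X} {w : X → ℂ}

/-- The mean of the weight `w` against the density `F²`, for `F ∈ L²(μ)`. -/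
def weightedMean (w : X → ℂ) (F : Lp ℝ 2 μ) : ℂ := ∫ x, F x ^ 2 • w x ∂μ

theorem integrable_sq_smul (hw : Measurable w) (hw1 : ∀ x, ‖w x‖ ≤ 1) (F : Lp ℝ 2 μ) :
    Integrable (fun x => F x ^ 2 • w x) μ :=
  (Lp.memLp F).integrable_sq.smul_bdd 1 hw.aestronglyMeasurable (ae_of_all _ hw1)

theorem integral_sq_eq_norm_sq (F : Lp ℝ 2 μ) : ∫ x, F x ^ 2 ∂μ = ‖F‖ ^ 2 := by
  rw [← real_inner_self_eq_norm_sq F, L2.inner_def]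
  simp [sq]

theorem integral_abs_sub_mul_abs_add_le (F H : Lp ℝ 2 μ) :
    ∫ x, |F x - H x| * |F x + H x| ∂μ ≤ ‖F - H‖ * ‖F + H‖ := by
  calc ∫ x, |F x - H x| * |F x + H x| ∂μ = ⟪|F - H|, |F + H|⟫_ℝ := by
        rw [L2.inner_def]
        refine integral_congr_ae ?_
        filter_upwards [Lp.coeFn_abs (F - H), Lp.coeFn_abs (F + H), Lp.coeFn_sub F H,
          Lp.coeFn_add F H] with x hx1 hx2 hx3 hx4
        simp only [hx1, hx2, hx3, hx4, RCLike.inner_apply, conj_trivial, Pi.sub_apply,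
          Pi.add_apply, mul_comm]
    _ ≤ ‖|F - H|‖ * ‖|F + H|‖ := real_inner_le_norm _ _
    _ = ‖F - H‖ * ‖F + H‖ := by simp only [norm_abs_eq_norm]

theorem norm_weightedMean_sub_le (hw : Measurable w) (hw1 : ∀ x, ‖w x‖ ≤ 1) (F H : Lp ℝ 2 μ) :
    ‖weightedMean w F - weightedMean w H‖ ≤ ‖F - H‖ * ‖F + H‖ := by
  have hprod : Integrable (fun x => |F x - H x| * |F x + H x|) μ :=
    ((Lp.memLp F).sub (Lp.memLp H)).abs.integrable_mul ((Lp.memLp F).add (Lp.memLp H)).abs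
  calc ‖weightedMean w F - weightedMean w H‖
      = ‖∫ x, ((F x - H x) * (F x + H x)) • w x ∂μ‖ := by
        rw [weightedMean, weightedMean,
          ← integral_sub (integrable_sq_smul hw hw1 F) (integrable_sq_smul hw hw1 H)]
        simp only [← sub_smul, ← sq_sub_sq, mul_comm]
    _ ≤ ∫ x, |F x - H x| * |F x + H x| ∂μ := by
        refine norm_integral_le_of_norm_le hprod (ae_of_all _ fun x => ?_)
        rw [norm_smul, Real.norm_eq_abs, abs_mul]
        exact mul_le_of_le_one_right (by positivity) (hw1 x)
    _ ≤ ‖F - H‖ * ‖F + H‖ := integral_abs_sub_mul_abs_add_le F H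

theorem norm_weightedMean_sub_sq_le (hw : Measurable w) (hw1 : ∀ x, ‖w x‖ ≤ 1) {F H : Lp ℝ 2 μ}
    {C : ℝ} (hF : ‖F‖ ≤ C) (hH : ‖H‖ ≤ C) :
    ‖weightedMean w F - weightedMean w H‖ ^ 2 ≤ 4 * C ^ 2 * ‖F - H‖ ^ 2 := by
  have hsum : ‖F + H‖ ≤ 2 * C := by linarith [norm_add_le F H]
  calc ‖weightedMean w F - weightedMean w H‖ ^ 2 ≤ (‖F - H‖ * (2 * C)) ^ 2 := by
        gcongr
        grw [norm_weightedMean_sub_le hw hw1, hsum]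
    _ = 4 * C ^ 2 * ‖F - H‖ ^ 2 := by ring

theorem integral_comp_of_measurePreserving {Y E : Type*} [MeasurableSpace Y]
    [NormedAddCommGroup E] [NormedSpace ℝ E] {κ : Measure Y} {φ : X → Y}
    (hφ : MeasurePreserving φ μ κ) {f : Y → E} (hf : AEStronglyMeasurable f κ) :
    ∫ x, f (φ x) ∂μ = ∫ y, f y ∂κ := by
  rw [← hφ.map_eq, integral_map hφ.aemeasurable (by rwa [hφ.map_eq])]

theorem mul_weightedMean_mk_smul [SMul G X] [SMulInvariantMeasure G X μ]
    [MeasurableConstSMul G X] (hw : Measurable w) {g : G} {z : ℂ}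
    (hg : ∀ x, w (g • x) = z * w x) (F : Lp ℝ 2 μ) :
    z * weightedMean w (DomMulAct.mk g • F) = weightedMean w F := by
  have hF : AEStronglyMeasurable (fun x => F x ^ 2 • w x) μ :=
    ((Lp.aestronglyMeasurable F).pow 2).smul hw.aestronglyMeasurable
  calc z * weightedMean w (DomMulAct.mk g • F) = ∫ x, F (g • x) ^ 2 • w (g • x) ∂μ := by
        rw [weightedMean, ← integral_const_mul]
        refine integral_congr_ae ?_
        filter_upwards [DomMulAct.smul_Lp_ae_eq (DomMulAct.mk g) F] with x hx
        rw [hx, hg, mul_smul_comm, Equiv.symm_apply_apply]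
    _ = weightedMean w F :=
        integral_comp_of_measurePreserving (measurePreserving_smul g μ) hF

theorem norm_sq_le_sum_norm_weightedMean {ι : Type*} [Fintype ι] {w : ι → X → ℂ}
    (hw : ∀ i, Measurable (w i)) (hw1 : ∀ i x, ‖w i x‖ ≤ 1) {c : ι → ℝ}
    (hc : ∀ᵐ x ∂μ, 1 ≤ ∑ i, c i * (w i x).re) (F : Lp ℝ 2 μ) :
    ‖F‖ ^ 2 ≤ ∑ i, |c i| * ‖weightedMean (w i) F‖ := by
  have hint : ∀ i, Integrable (fun x => F x ^ 2 * (w i x).re) μ := fun i => by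
    simpa only [RCLike.smul_re, RCLike.re_eq_complex_re] using
      (integrable_sq_smul (hw i) (hw1 i) F).re
  have hre : ∀ i, ∫ x, F x ^ 2 * (w i x).re ∂μ = (weightedMean (w i) F).re := fun i => by
    simpa only [RCLike.smul_re, RCLike.re_eq_complex_re, weightedMean] using
      integral_re (integrable_sq_smul (hw i) (hw1 i) F)
  calc ‖F‖ ^ 2 = ∫ x, F x ^ 2 ∂μ := (integral_sq_eq_norm_sq F).symm
    _ ≤ ∫ x, ∑ i, c i * (F x ^ 2 * (w i x).re) ∂μ := by
        refine integral_mono_ae (Lp.memLp F).integrable_sq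
          (integrable_finsetSum _ fun i _ => (hint i).const_mul _) ?_
        filter_upwards [hc] with x hx
        simpa only [Finset.mul_sum, mul_one, mul_left_comm] using
          mul_le_mul_of_nonneg_left hx (sq_nonneg (F x))
    _ = ∑ i, c i * (weightedMean (w i) F).re := by
        rw [integral_finsetSum _ fun i _ => (hint i).const_mul _]
        simp only [integral_const_mul, hre]
    _ ≤ ∑ i, |c i| * ‖weightedMean (w i) F‖ := by
        refine Finset.sum_le_sum fun i _ => (le_abs_self _).trans ?_
        rw [abs_mul]
        exact mul_le_mul_of_nonneg_left (abs_re_le_norm _) (abs_nonneg _)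

end WeightedMean

section Eigenweight

theorem norm_integral_lt_of_mem_support {Z E : Type*} [TopologicalSpace Z] [MeasurableSpace Z]
    [HereditarilyLindelofSpace Z] {ν : Measure Z} [IsProbabilityMeasure ν]
    [NormedAddCommGroup E] [NormedSpace ℝ E] [StrictConvexSpace ℝ E] [CompleteSpace E]
    {f : Z → E} (hf : Continuous f) {C : ℝ} (hC : ∀ z, ‖f z‖ ≤ C) {x y : Z}
    (hx : x ∈ ν.support) (hy : y ∈ ν.support) (hxy : f x ≠ f y) :
    ‖∫ z, f z ∂ν‖ < C := by
  rcases ae_eq_const_or_norm_integral_lt_of_norm_le_const (ae_of_all ν hC) with h | h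
  · have hsub : ν.support ⊆ {z | f z = ⨍ z, f z ∂ν} :=
      Measure.support_subset_of_isClosed (isClosed_eq hf continuous_const) h
    exact absurd ((hsub hx).trans (hsub hy).symm) hxy
  · simpa using h

section Phase

variable {Z : Type*} [MeasurableSpace Z] {ν : Measure Z}

theorem norm_integral_inv_coe (e : Z → Circle) :
    ‖∫ z, ((e⁻¹) z : ℂ) ∂ν‖ = ‖∫ z, (e z : ℂ) ∂ν‖ := by
  simp only [Pi.inv_apply, Circle.coe_inv_eq_conj, integral_conj, RCLike.norm_conj]

theorem mul_norm_sq_le_integral_norm_sub_mul_sq [TopologicalSpace Z] [CompactSpace Z]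
    [OpensMeasurableSpace Z] [IsProbabilityMeasure ν] {e : Z → Circle} (he : Continuous e)
    (a b : ℂ) :
    (1 - ‖∫ z, (e z : ℂ) ∂ν‖ ^ 2) * ‖b‖ ^ 2 ≤ ∫ z, ‖a - e z * b‖ ^ 2 ∂ν := by
  have hcont : Continuous fun z => (e z : ℂ) * b := by fun_prop
  calc (1 - ‖∫ z, (e z : ℂ) ∂ν‖ ^ 2) * ‖b‖ ^ 2
      = ∫ z, ‖(e z : ℂ) * b‖ ^ 2 ∂ν - ‖∫ z, (e z : ℂ) * b ∂ν‖ ^ 2 := by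
        simp [integral_mul_const, mul_pow, sub_mul, Circle.norm_coe]
    _ ≤ ∫ z, ‖(e z : ℂ) * b - a‖ ^ 2 ∂ν := by
        rw [integral_norm_sub_sq (hcont.memLp_of_hasCompactSupport (.of_compactSpace _))]
        exact le_add_of_nonneg_right (sq_nonneg _)
    _ = ∫ z, ‖a - e z * b‖ ^ 2 ∂ν := by simp only [norm_sub_rev]

end Phase

variable {X Z G : Type*} [MeasurableSpace X]

/-- A measurable weight of modulus at most one that each `g z` multiplies by the phase `e z`. -/
structure IsEigenweight [SMul G X] (g : Z → G) (e : Z → Circle) (w : X → ℂ) : Prop where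
  measurable : Measurable w
  norm_le_one : ∀ x, ‖w x‖ ≤ 1
  map_smul : ∀ z x, w (g z • x) = e z * w x

namespace IsEigenweight

variable {g : Z → G} {e : Z → Circle} {w : X → ℂ}

theorem sq [SMul G X] (h : IsEigenweight g e w) : IsEigenweight g (e ^ 2) (w ^ 2) where
  measurable := h.measurable.pow_const 2
  norm_le_one x := by
    simpa only [Pi.pow_apply, norm_pow] using pow_le_one₀ (norm_nonneg _) (h.norm_le_one x)
  map_smul z x := by simp [h.map_smul, mul_pow]

variable {μ : Measure X} [Monoid G] [MulAction G X] [SMulInvariantMeasure G X μ]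
  [MeasurableConstSMul G X]

theorem weightedMean_mk_smul (h : IsEigenweight g e w) (F : Lp ℝ 2 μ) (z : Z) :
    weightedMean w (DomMulAct.mk (g z) • F) = ((e⁻¹) z : ℂ) * weightedMean w F := by
  rw [← mul_weightedMean_mk_smul h.measurable (h.map_smul z) F, ← mul_assoc, Pi.inv_apply,
    ← Circle.coe_mul, inv_mul_cancel, Circle.coe_one, one_mul]

variable [TopologicalSpace G] [ContinuousSMul Gᵈᵐᵃ (Lp ℝ 2 μ)]
  [TopologicalSpace Z] [CompactSpace Z] [MeasurableSpace Z] [OpensMeasurableSpace Z]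
  {ν : Measure Z} [IsProbabilityMeasure ν]

theorem integral_norm_sub_weightedMean_sq_le (h : IsEigenweight g e w) (hg : Continuous g)
    (he : Continuous e) (F : Lp ℝ 2 μ) :
    ∫ z, ‖weightedMean w (koopmanMean ν g F) - ((e⁻¹) z : ℂ) * weightedMean w F‖ ^ 2 ∂ν
      ≤ 4 * ‖F‖ ^ 2 * (‖F‖ ^ 2 - ‖koopmanMean ν g F‖ ^ 2) := by
  have := continuous_mk_smul hg F
  have := he.inv
  calc ∫ z, ‖weightedMean w (koopmanMean ν g F) - ((e⁻¹) z : ℂ) * weightedMean w F‖ ^ 2 ∂ν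
      ≤ ∫ z, 4 * ‖F‖ ^ 2 * ‖DomMulAct.mk (g z) • F - koopmanMean ν g F‖ ^ 2 ∂ν := by
        refine integral_mono (Continuous.integrable_of_hasCompactSupport (by fun_prop)
          (.of_compactSpace _)) (Continuous.integrable_of_hasCompactSupport (by fun_prop)
          (.of_compactSpace _)) fun z => ?_
        rw [← h.weightedMean_mk_smul, norm_sub_rev]
        exact norm_weightedMean_sub_sq_le h.measurable h.norm_le_one
          (DomMulAct.norm_smul_Lp _ F).le (norm_koopmanMean_le ν g F)
    _ = 4 * ‖F‖ ^ 2 * (‖F‖ ^ 2 - ‖koopmanMean ν g F‖ ^ 2) := by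
        rw [integral_const_mul, integral_norm_smul_sub_koopmanMean_sq ν hg]

theorem norm_weightedMean_sq_le (h : IsEigenweight g e w) (hg : Continuous g)
    (he : Continuous e) (F : Lp ℝ 2 μ) :
    (1 - ‖∫ z, (e z : ℂ) ∂ν‖ ^ 2) * ‖weightedMean w F‖ ^ 2
      ≤ 4 * ‖F‖ ^ 2 * (‖F‖ ^ 2 - ‖koopmanMean ν g F‖ ^ 2) := by
  grw [← h.integral_norm_sub_weightedMean_sq_le hg he F,
    ← mul_norm_sq_le_integral_norm_sub_mul_sq he.inv, norm_integral_inv_coe]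

theorem norm_weightedMean_koopmanMean_sq_le (h : IsEigenweight g e w) (hg : Continuous g)
    (he : Continuous e) (F : Lp ℝ 2 μ) :
    (1 - ‖∫ z, (e z : ℂ) ∂ν‖ ^ 2) * ‖weightedMean w (koopmanMean ν g F)‖ ^ 2
      ≤ 4 * ‖F‖ ^ 2 * (‖F‖ ^ 2 - ‖koopmanMean ν g F‖ ^ 2) := by
  grw [← h.integral_norm_sub_weightedMean_sq_le hg he F]
  have hrot : ∀ z, ‖weightedMean w (koopmanMean ν g F) - ((e⁻¹) z : ℂ) * weightedMean w F‖
      = ‖weightedMean w F - e z * weightedMean w (koopmanMean ν g F)‖ := fun z => by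
    rw [norm_sub_rev, ← one_mul ‖_ - _‖, ← Circle.norm_coe (e z), ← norm_mul, mul_sub, ← mul_assoc,
      Pi.inv_apply, ← Circle.coe_mul, mul_inv_cancel, Circle.coe_one, one_mul]
  simpa only [hrot] using mul_norm_sq_le_integral_norm_sub_mul_sq he _ _

end IsEigenweight

end Eigenweight

section SpectralGap

variable {X Z G : Type*} [MeasurableSpace X] {μ : Measure X}

theorem le_sqrt_mul_of_sq_sq_le {x y M : ℝ} (hx : 0 ≤ x) (hM : 0 ≤ M)
    (h : (y ^ 2) ^ 2 ≤ M * x ^ 2 * (x ^ 2 - y ^ 2)) : y ≤ √((M + 1) / (M + 2)) * x := by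
  have hsq : y ^ 2 * (M + 2) ≤ x ^ 2 * (M + 1) := by
    rcases hx.eq_or_lt with rfl | hx
    · have hy : (y ^ 2) ^ 2 ≤ 0 := by simpa using h
      simp [pow_eq_zero_iff two_ne_zero |>.1 (hy.antisymm (sq_nonneg _))]
    · refine le_of_mul_le_mul_left ?_ (pow_pos hx 2)
      nlinarith [sq_nonneg (x ^ 2 - y ^ 2)]
  refine (Real.le_sqrt_of_sq_le ?_ : y ≤ √((M + 1) / (M + 2) * x ^ 2)).trans_eq ?_
  · rw [div_mul_eq_mul_div, le_div_iff₀ (by positivity)]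
    linarith
  · rw [Real.sqrt_mul (by positivity), Real.sqrt_sq hx]

/-- The inequality `hc` prevents all weighted means of `P F` from being small at once, while `h`
makes them small as soon as `R` nearly preserves the norm of `F`. -/
theorem exists_norm_le_of_weightedMean_sq_le {ι : Type*} [Fintype ι] {w : ι → X → ℂ}
    (hw : ∀ i, Measurable (w i)) (hw1 : ∀ i x, ‖w i x‖ ≤ 1) {c : ι → ℝ}
    (hc : ∀ᵐ x ∂μ, 1 ≤ ∑ i, c i * (w i x).re) {P R : Lp ℝ 2 μ → Lp ℝ 2 μ}
    (hRP : ∀ F, ‖R F‖ ≤ ‖P F‖) (hRF : ∀ F, ‖R F‖ ≤ ‖F‖) {C : ι → ℝ}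
    (h : ∀ i F, ‖weightedMean (w i) (P F)‖ ^ 2 ≤ C i * (‖F‖ ^ 2 * (‖F‖ ^ 2 - ‖R F‖ ^ 2))) :
    ∃ q : ℝ, 0 < q ∧ q < 1 ∧ ∀ F, ‖R F‖ ≤ q * ‖F‖ := by
  set M := (∑ i, |c i| * √(C i)) ^ 2
  have hM0 : 0 ≤ M := sq_nonneg _
  refine ⟨√((M + 1) / (M + 2)), by positivity, ?_, fun F => ?_⟩
  · rw [Real.sqrt_lt' one_pos, one_pow, div_lt_one (by positivity)]
    linarith
  have hD : 0 ≤ ‖F‖ ^ 2 * (‖F‖ ^ 2 - ‖R F‖ ^ 2) :=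
    mul_nonneg (sq_nonneg _) (sub_nonneg.2 (by grw [hRF F]))
  have hsqrt : ∀ i, ‖weightedMean (w i) (P F)‖
      ≤ √(C i) * √(‖F‖ ^ 2 * (‖F‖ ^ 2 - ‖R F‖ ^ 2)) := fun i => by
    rw [← Real.sqrt_mul' _ hD]
    exact Real.le_sqrt_of_sq_le (h i F)
  refine le_sqrt_mul_of_sq_sq_le (norm_nonneg F) hM0 ?_
  calc (‖R F‖ ^ 2) ^ 2 ≤ (‖P F‖ ^ 2) ^ 2 := by grw [hRP F]
    _ ≤ (∑ i, |c i| * (√(C i) * √(‖F‖ ^ 2 * (‖F‖ ^ 2 - ‖R F‖ ^ 2)))) ^ 2 := by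
        grw [norm_sq_le_sum_norm_weightedMean hw hw1 hc (P F)]
        gcongr with i
        exact hsqrt i
    _ = M * ‖F‖ ^ 2 * (‖F‖ ^ 2 - ‖R F‖ ^ 2) := by
        simp only [← mul_assoc, ← Finset.sum_mul]
        rw [mul_pow, Real.sq_sqrt hD, mul_assoc]

variable [Monoid G] [MulAction G X] [SMulInvariantMeasure G X μ]
  [MeasurableConstSMul G X] [TopologicalSpace G] [ContinuousSMul Gᵈᵐᵃ (Lp ℝ 2 μ)]
  [TopologicalSpace Z] [CompactSpace Z] [MeasurableSpace Z] [OpensMeasurableSpace Z]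
  {ν : Measure Z} [IsProbabilityMeasure ν]

theorem exists_norm_koopmanMean_koopmanMean_le {ι : Type*} [Fintype ι] {a b : Z → G}
    (ha : Continuous a) (hb : Continuous b) {e : ι → Z → Circle} (he : ∀ i, Continuous (e i))
    (he1 : ∀ i, ‖∫ z, (e i z : ℂ) ∂ν‖ < 1) {w : ι → X → ℂ}
    (hw : ∀ i, IsEigenweight a (e i) (w i) ∨ IsEigenweight b (e i) (w i)) {c : ι → ℝ}
    (hc : ∀ᵐ x ∂μ, 1 ≤ ∑ i, c i * (w i x).re) :
    ∃ q : ℝ, 0 < q ∧ q < 1 ∧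
      ∀ F : Lp ℝ 2 μ, ‖koopmanMean ν a (koopmanMean ν b F)‖ ≤ q * ‖F‖ := by
  have hPP : ∀ F : Lp ℝ 2 μ, ‖koopmanMean ν a (koopmanMean ν b F)‖ ≤ ‖koopmanMean ν b F‖ :=
    fun F => norm_koopmanMean_le ν a _
  have hP : ∀ F : Lp ℝ 2 μ, ‖koopmanMean ν b F‖ ≤ ‖F‖ := norm_koopmanMean_le ν b
  refine exists_norm_le_of_weightedMean_sq_le (fun i => (hw i).elim (·.measurable) (·.measurable))
    (fun i => (hw i).elim (·.norm_le_one) (·.norm_le_one)) hc hPP (fun F => (hPP F).trans (hP F))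
    (C := fun i => 4 / (1 - ‖∫ z, (e i z : ℂ) ∂ν‖ ^ 2)) fun i F => ?_
  rw [div_mul_eq_mul_div, ← mul_assoc,
    le_div_iff₀' (sub_pos.2 (pow_lt_one₀ (norm_nonneg _) (he1 i) two_ne_zero))]
  rcases hw i with h | h
  · have hnn := sub_nonneg.2 (pow_le_pow_left₀ (norm_nonneg _) (hPP F) 2)
    refine (h.norm_weightedMean_sq_le ha (he i) _).trans ?_
    gcongr <;> exact hP F
  · grw [h.norm_weightedMean_koopmanMean_sq_le hb (he i), hPP F]

end SpectralGap

section InfiniteProduct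

theorem measurePreserving_update_infinitePi {ι : Type*} [DecidableEq ι] {X : ι → Type*}
    [∀ i, MeasurableSpace (X i)] (μ : ∀ i, Measure (X i)) [∀ i, IsProbabilityMeasure (μ i)]
    (j : ι) :
    MeasurePreserving (fun p : (∀ i, X i) × X j => Function.update p.1 j p.2)
      ((Measure.infinitePi μ).prod (μ j)) (Measure.infinitePi μ) := by
  refine ⟨measurable_update', Measure.eq_infinitePi _ fun s t ht => ?_⟩
  have hpre : (fun p : (∀ i, X i) × X j => Function.update p.1 j p.2) ⁻¹' (s : Set ι).pi t
      = ((s.erase j : Finset ι) : Set ι).pi t ×ˢ {x | j ∈ s → x ∈ t j} := by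
    ext ⟨ω, x⟩
    simp only [Set.mem_preimage, Set.mem_pi, Set.mem_prod, Finset.mem_coe, Finset.mem_erase,
      Set.mem_ofPred_eq]
    refine ⟨fun h => ⟨fun i hi => by simpa [hi.1] using h i hi.2, fun hj => by simpa using h j hj⟩,
      fun ⟨hω, hx⟩ i hi => ?_⟩
    obtain rfl | hij := eq_or_ne i j
    · simpa using hx hi
    · simpa [hij] using hω i ⟨hij, hi⟩
  rw [Measure.map_apply measurable_update' (.pi s.countable_toSet fun i _ => ht i), hpre,
    Measure.prod_prod, Measure.infinitePi_pi _ fun i _ => ht i]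
  by_cases hj : j ∈ s
  · simp [hj, Finset.prod_erase_mul]
  · simp [hj]

theorem measurePreserving_comp_infinitePi {ι κ Z : Type*} [MeasurableSpace Z] (ν : Measure Z)
    [IsProbabilityMeasure ν] {e : κ → ι} (he : Function.Injective e) :
    MeasurePreserving (fun (ω : ι → Z) k => ω (e k))
      (Measure.infinitePi fun _ => ν) (Measure.infinitePi fun _ => ν) := by
  have hind := (ProbabilityTheory.iIndepFun_infinitePi (P := fun _ : ι => ν)
    (X := fun _ z => z) fun _ => measurable_id).precomp he
  refine ⟨by fun_prop, ?_⟩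
  rw [(ProbabilityTheory.iIndepFun_iff_map_fun_eq_infinitePi_map fun _ => by fun_prop).1 hind]
  simp [Measure.infinitePi_map_eval]

end InfiniteProduct

section AlternatingCocycle

variable {Z G : Type*} [Monoid G]

/-- The cocycle `b (ω (2k - 1)) * a (ω (2k - 2)) * ⋯ * b (ω 1) * a (ω 0)` that reads two
coordinates of `ω` at each step. -/
def alternatingCocycle (a b : Z → G) (ω : ℤ → Z) : ℕ → G
  | 0 => 1
  | k + 1 => b (ω (2 * k + 1)) * a (ω (2 * k)) * alternatingCocycle a b ω k

variable {a b : Z → G}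

theorem continuous_alternatingCocycle [TopologicalSpace G] [ContinuousMul G] [TopologicalSpace Z]
    (ha : Continuous a) (hb : Continuous b) (k : ℕ) :
    Continuous fun ω => alternatingCocycle a b ω k := by
  induction k with
  | zero => exact continuous_const
  | succ k ih => simp only [alternatingCocycle]; fun_prop

theorem alternatingCocycle_update (ω : ℤ → Z) {k : ℕ} {j : ℤ} (hj : 2 * k ≤ j) (z : Z) :
    alternatingCocycle a b (Function.update ω j z) k = alternatingCocycle a b ω k := by
  induction k with
  | zero => rfl
  | succ k ih =>
    push_cast at hj
    rw [alternatingCocycle, alternatingCocycle, ih (by lia),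
      Function.update_of_ne (by lia), Function.update_of_ne (by lia)]

theorem alternatingCocycle_add (ω : ℤ → Z) (m n : ℕ) :
    alternatingCocycle a b ω (m + n)
      = alternatingCocycle a b (fun i => ω (2 * m + i)) n * alternatingCocycle a b ω m := by
  induction n with
  | zero => simp [alternatingCocycle]
  | succ n ih =>
    rw [← add_assoc, alternatingCocycle, ih, alternatingCocycle, mul_assoc]
    push_cast
    simp only [mul_add, mul_assoc, add_assoc]

variable {X : Type*} [MeasurableSpace X] {μ : Measure X} [MulAction G X]
  [SMulInvariantMeasure G X μ] [MeasurableConstSMul G X] [TopologicalSpace G]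
  [ContinuousSMul Gᵈᵐᵃ (Lp ℝ 2 μ)] [TopologicalSpace Z] [CompactSpace Z] [MeasurableSpace Z]
  {ν : Measure Z} [IsProbabilityMeasure ν]

theorem mk_smul_koopmanMean [OpensMeasurableSpace Z] (ha : Continuous a) (h : G) (F : Lp ℝ 2 μ) :
    DomMulAct.mk h • koopmanMean ν a F = ∫ z, DomMulAct.mk (a z * h) • F ∂ν := by
  let T : Lp ℝ 2 μ →L[ℝ] Lp ℝ 2 μ :=
    ⟨DistribSMul.toLinearMap ℝ _ (DomMulAct.mk h), continuous_const_smul _⟩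
  have hint : Integrable (fun z => DomMulAct.mk (a z) • F) ν :=
    (continuous_mk_smul ha F).integrable_of_hasCompactSupport (.of_compactSpace _)
  simp only [DomMulAct.mk_mul, mul_smul]
  exact (T.integral_comp_comm hint).symm

variable [SecondCountableTopology Z] [BorelSpace Z] [ContinuousMul G]

/-- Integrating first over the coordinate `j`, on which `h` does not depend, turns the factor
`a (ω j)` into its Koopman mean. -/
theorem integral_mk_mul_smul {ι : Type*} [Countable ι] [DecidableEq ι] {j : ι} {h : (ι → Z) → G}
    (hh : Continuous h) (hj : ∀ ω z, h (Function.update ω j z) = h ω) (ha : Continuous a)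
    (F : Lp ℝ 2 μ) :
    ∫ ω, DomMulAct.mk (a (ω j) * h ω) • F ∂(Measure.infinitePi fun _ => ν)
      = ∫ ω, DomMulAct.mk (h ω) • koopmanMean ν a F ∂(Measure.infinitePi fun _ => ν) := by
  have hcont : Continuous fun ω => DomMulAct.mk (a (ω j) * h ω) • F :=
    continuous_mk_smul (by fun_prop) F
  have hcont' : Continuous fun p : (ι → Z) × Z => DomMulAct.mk (a p.2 * h p.1) • F :=
    continuous_mk_smul (by fun_prop) F
  rw [← integral_comp_of_measurePreserving (measurePreserving_update_infinitePi (fun _ => ν) j)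
    (hcont.integrable_of_hasCompactSupport (.of_compactSpace _)).aestronglyMeasurable]
  simp only [Function.update_self, hj]
  rw [integral_prod _ (hcont'.integrable_of_hasCompactSupport (.of_compactSpace _))]
  simp only [mk_smul_koopmanMean ha]

theorem norm_integral_alternatingCocycle_smul_le (ha : Continuous a) (hb : Continuous b) {q : ℝ}
    (hq : 0 ≤ q) (hgap : ∀ F : Lp ℝ 2 μ, ‖koopmanMean ν a (koopmanMean ν b F)‖ ≤ q * ‖F‖)
    (k : ℕ) (F : Lp ℝ 2 μ) :
    ‖∫ ω, DomMulAct.mk (alternatingCocycle a b ω k) • F ∂(Measure.infinitePi fun _ => ν)‖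
      ≤ q ^ k * ‖F‖ := by
  induction k generalizing F with
  | zero => simp [alternatingCocycle]
  | succ k ih =>
    have hk := continuous_alternatingCocycle ha hb k
    have hstep : ∫ ω, DomMulAct.mk (alternatingCocycle a b ω (k + 1)) • F
          ∂(Measure.infinitePi fun _ => ν)
        = ∫ ω, DomMulAct.mk (alternatingCocycle a b ω k) • koopmanMean ν a (koopmanMean ν b F)
          ∂(Measure.infinitePi fun _ => ν) := by
      simp only [alternatingCocycle, mul_assoc]
      rw [integral_mk_mul_smul (by fun_prop) (fun ω z => ?_) hb,
        integral_mk_mul_smul hk (fun ω z => alternatingCocycle_update ω le_rfl z) ha]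
      rw [alternatingCocycle_update ω (by lia), Function.update_of_ne (by lia)]
    rw [hstep, pow_succ, mul_assoc]
    exact (ih _).trans (by gcongr; exact hgap F)

end AlternatingCocycle

section Unimodular

open scoped Matrix

variable (ι : Type*) [Fintype ι] [DecidableEq ι]

/-- The complex matrices whose determinant has modulus one; they act on `ι → ℂ` preserving
Lebesgue measure. -/
def unimodular : Submonoid (Matrix ι ι ℂ) :=
  (Submonoid.unitSphere ℂ).comap Matrix.detMonoidHom

variable {ι}

theorem mem_unimodular {A : Matrix ι ι ℂ} : A ∈ unimodular ι ↔ ‖A.det‖ = 1 :=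
  mem_sphere_zero_iff_norm

theorem norm_det_coe_unimodular (g : unimodular ι) : ‖(g : Matrix ι ι ℂ).det‖ = 1 :=
  mem_unimodular.1 g.2

instance : MulAction (unimodular ι) (ι → ℂ) where
  smul g v := (g : Matrix ι ι ℂ) *ᵥ v
  one_smul := Matrix.one_mulVec
  mul_smul g h v := (Matrix.mulVec_mulVec v (g : Matrix ι ι ℂ) h).symm

theorem unimodular_smul_def (g : unimodular ι) (v : ι → ℂ) : g • v = (g : Matrix ι ι ℂ) *ᵥ v :=
  rfl

instance : ContinuousSMul (unimodular ι) (ι → ℂ) where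
  continuous_smul :=
    (continuous_subtype_val.comp continuous_fst).matrix_mulVec continuous_snd

instance : MeasurableConstSMul (unimodular ι) (ι → ℂ) where
  measurable_const_smul g := (continuous_const_smul g).measurable

instance : SMulInvariantMeasure (unimodular ι) (ι → ℂ) volume where
  measure_preimage_smul g s hs := by
    let L := (Matrix.toLin' (g : Matrix ι ι ℂ)).restrictScalars ℝ
    have hdet : LinearMap.det L = 1 := by
      rw [LinearMap.det_restrictScalars, LinearMap.det_toLin', Algebra.norm_complex_apply,
        normSq_eq_norm_sq, norm_det_coe_unimodular, one_pow]
    have hmap := Measure.map_linearMap_addHaar_eq_smul_addHaar (volume : Measure (ι → ℂ))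
      (f := L) (by rw [hdet]; exact one_ne_zero)
    rw [hdet, inv_one, abs_one, ENNReal.ofReal_one, one_smul] at hmap
    conv_rhs => rw [← hmap]
    exact (Measure.map_apply (measurable_const_smul g) hs).symm

instance : ContinuousSMul (unimodular ι)ᵈᵐᵃ (Lp ℝ 2 (volume : Measure (ι → ℂ))) :=
  let _ : MeasurableSpace (unimodular ι) := borel _
  have : OpensMeasurableSpace (unimodular ι) := ⟨le_rfl⟩
  have : Fact ((2 : ℝ≥0∞) ≠ ∞) := ⟨ENNReal.ofNat_ne_top⟩
  inferInstance

end Unimodular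

section EntrywiseNorm

open scoped Matrix Nat

variable {ι : Type*} [Fintype ι]

theorem norm_mulVec_le_card_mul (A : Matrix ι ι ℂ) (v : ι → ℂ) :
    ‖A *ᵥ v‖ ≤ Fintype.card ι * ‖A‖ * ‖v‖ := by
  refine (pi_norm_le_iff_of_nonneg (by positivity)).2 fun i => ?_
  calc ‖∑ j, A i j * v j‖ ≤ ∑ _j : ι, ‖A‖ * ‖v‖ := norm_sum_le_of_le _ fun j _ => by
        grw [norm_mul, A.norm_entry_le_entrywise_sup_norm, norm_le_pi_norm v j]
    _ = Fintype.card ι * ‖A‖ * ‖v‖ := by simp [mul_assoc]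

theorem norm_mul_le_card_mul (A B : Matrix ι ι ℂ) : ‖A * B‖ ≤ Fintype.card ι * ‖A‖ * ‖B‖ := by
  refine (Matrix.norm_le_iff (by positivity)).2 fun i j => ?_
  calc ‖(A *ᵥ fun k => B k j) i‖ ≤ Fintype.card ι * ‖A‖ * ‖fun k => B k j‖ :=
        (norm_le_pi_norm _ i).trans (norm_mulVec_le_card_mul A _)
    _ ≤ Fintype.card ι * ‖A‖ * ‖B‖ := by
        gcongr
        exact (pi_norm_le_iff_of_nonneg (norm_nonneg B)).2 fun k =>
          B.norm_entry_le_entrywise_sup_norm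

variable [DecidableEq ι]

theorem norm_det_le_card_mul_pow (A : Matrix ι ι ℂ) :
    ‖A.det‖ ≤ (Fintype.card ι * ‖A‖) ^ Fintype.card ι := by
  have h := Matrix.det_le (abv := NormedField.toAbsoluteValue ℂ) (A := A) (x := ‖A‖)
    fun i j => A.norm_entry_le_entrywise_sup_norm
  rw [nsmul_eq_mul] at h
  refine h.trans ?_
  rw [mul_pow]
  gcongr
  exact_mod_cast (Fintype.card ι).factorial_le_pow

/-- The multiple of the entrywise norm by the size of the matrix, which unlike the entrywise norm
is submultiplicative. -/
def scaledNorm (g : unimodular ι) : ℝ :=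
  Fintype.card ι * ‖(g : Matrix ι ι ℂ)‖

theorem continuous_scaledNorm : Continuous (scaledNorm (ι := ι)) :=
  continuous_const.mul continuous_subtype_val.norm

theorem scaledNorm_mul_le (g h : unimodular ι) :
    scaledNorm (g * h) ≤ scaledNorm g * scaledNorm h := by
  unfold scaledNorm
  grw [Submonoid.coe_mul, norm_mul_le_card_mul]
  exact le_of_eq (by ring)

theorem norm_smul_le_scaledNorm_mul (g : unimodular ι) (v : ι → ℂ) :
    ‖g • v‖ ≤ scaledNorm g * ‖v‖ :=
  norm_mulVec_le_card_mul _ v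

theorem one_le_scaledNorm [Nonempty ι] (g : unimodular ι) : 1 ≤ scaledNorm g := by
  refine (one_le_pow_iff_of_nonneg (by unfold scaledNorm; positivity)
    (Fintype.card_ne_zero (α := ι))).1 ?_
  rw [← norm_det_coe_unimodular g]
  exact norm_det_le_card_mul_pow _

theorem scaledNorm_pos [Nonempty ι] (g : unimodular ι) : 0 < scaledNorm g :=
  one_pos.trans_le (one_le_scaledNorm g)

theorem log_norm_coe_unimodular [Nonempty ι] (g : unimodular ι) :
    Real.log ‖(g : Matrix ι ι ℂ)‖ = Real.log (scaledNorm g) - Real.log (Fintype.card ι) := by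
  have hne : Fintype.card ι * ‖(g : Matrix ι ι ℂ)‖ ≠ 0 := (scaledNorm_pos g).ne'
  rw [scaledNorm, Real.log_mul (left_ne_zero_of_mul hne) (right_ne_zero_of_mul hne),
    add_sub_cancel_left]

end EntrywiseNorm

section BallIndicator

variable (ι : Type*) [Fintype ι]

/-- The indicator function of the unit ball of `ι → ℂ`, as an element of `L²`. -/
def ballIndicator : Lp ℝ 2 (volume : Measure (ι → ℂ)) :=
  indicatorConstLp 2 measurableSet_ball (measure_ball_lt_top (x := 0) (r := 1)).ne 1

variable {ι}

theorem norm_ballIndicator_sq :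
    ‖ballIndicator ι‖ ^ 2 = (volume : Measure (ι → ℂ)).real (Metric.ball 0 1) := by
  rw [← real_inner_self_eq_norm_sq, ballIndicator,
    L2.real_inner_indicatorConstLp_one_indicatorConstLp_one, Set.inter_self]

theorem norm_ballIndicator_pos : 0 < ‖ballIndicator ι‖ := by
  refine lt_of_pow_lt_pow_left₀ 2 (norm_nonneg _) ?_
  rw [norm_ballIndicator_sq, zero_pow two_ne_zero]
  exact ENNReal.toReal_pos (Metric.measure_ball_pos _ _ one_pos).ne' measure_ball_lt_top.ne

theorem inv_pow_mul_norm_sq_le_inner_ballIndicator [DecidableEq ι] [Nonempty ι]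
    (g : unimodular ι) :
    (scaledNorm g ^ (2 * Fintype.card ι))⁻¹ * ‖ballIndicator ι‖ ^ 2
      ≤ ⟪ballIndicator ι, DomMulAct.mk g • ballIndicator ι⟫_ℝ := by
  set R := scaledNorm g
  have hR : 1 ≤ R := one_le_scaledNorm g
  have hball : Metric.ball (0 : ι → ℂ) R⁻¹
      ⊆ Metric.ball 0 1 ∩ (g • ·) ⁻¹' Metric.ball (0 : ι → ℂ) 1 := by
    intro v hv
    rw [mem_ball_zero_iff] at hv
    refine ⟨mem_ball_zero_iff.2 (hv.trans_le (inv_le_one_of_one_le₀ hR)),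
      mem_ball_zero_iff.2 ((norm_smul_le_scaledNorm_mul g v).trans_lt ?_)⟩
    rwa [← lt_inv_mul_iff₀ (by positivity), mul_one]
  have hrank : Module.finrank ℝ (ι → ℂ) = 2 * Fintype.card ι := by
    simp [Module.finrank_pi_fintype, finrank_real_complex, mul_comm]
  rw [norm_ballIndicator_sq]
  calc (R ^ (2 * Fintype.card ι))⁻¹ * (volume : Measure (ι → ℂ)).real (Metric.ball 0 1)
      = (volume : Measure (ι → ℂ)).real (Metric.ball 0 R⁻¹) := by
        rw [measureReal_def, measureReal_def,
          Measure.addHaar_ball _ (0 : ι → ℂ) (r := R⁻¹) (by positivity), ENNReal.toReal_mul,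
          ENNReal.toReal_ofReal (by positivity), hrank, inv_pow]
    _ ≤ (volume : Measure (ι → ℂ)).real
          (Metric.ball 0 1 ∩ (g • ·) ⁻¹' Metric.ball (0 : ι → ℂ) 1) :=
        measureReal_mono hball (measure_ne_top_of_subset Set.inter_subset_left
          measure_ball_lt_top.ne)
    _ = ⟪ballIndicator ι, DomMulAct.mk g • ballIndicator ι⟫_ℝ := by
        rw [ballIndicator, DomMulAct.mk_smul_indicatorConstLp,
          L2.real_inner_indicatorConstLp_one_indicatorConstLp_one
            (hμt := by
              rw [SMulInvariantMeasure.measure_preimage_smul g measurableSet_ball]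
              exact measure_ball_lt_top.ne)]

end BallIndicator

section LyapunovExponent

variable {Z ι : Type*} [Fintype ι] [DecidableEq ι] {a b : Z → unimodular ι}

/-- The mean of `log (scaledNorm Φ)` over the product measure, `Φ` being the `k`-th alternating
cocycle; the scaled norm makes it subadditive in `k`. -/
def meanLogNorm [MeasurableSpace Z] (ν : Measure Z) (a b : Z → unimodular ι) (k : ℕ) : ℝ :=
  ∫ ω, Real.log (scaledNorm (alternatingCocycle a b ω k)) ∂(Measure.infinitePi fun _ => ν)

variable [Nonempty ι] [TopologicalSpace Z]

theorem continuous_log_scaledNorm_alternatingCocycle (ha : Continuous a) (hb : Continuous b)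
    (k : ℕ) : Continuous fun ω => Real.log (scaledNorm (alternatingCocycle a b ω k)) :=
  (continuous_scaledNorm.comp (continuous_alternatingCocycle ha hb k)).log
    fun _ => (scaledNorm_pos _).ne'

variable [CompactSpace Z] [SecondCountableTopology Z] [MeasurableSpace Z] [BorelSpace Z]
  {ν : Measure Z} [IsProbabilityMeasure ν]

theorem integrable_log_scaledNorm_alternatingCocycle (ha : Continuous a) (hb : Continuous b)
    (k : ℕ) : Integrable (fun ω => Real.log (scaledNorm (alternatingCocycle a b ω k)))
      (Measure.infinitePi fun _ => ν) :=
  (continuous_log_scaledNorm_alternatingCocycle ha hb k).integrable_of_hasCompactSupport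
    (.of_compactSpace _)

theorem subadditive_meanLogNorm (ha : Continuous a) (hb : Continuous b) :
    Subadditive (meanLogNorm ν a b) := by
  intro m n
  have hshift := measurePreserving_comp_infinitePi ν (add_right_injective (2 * m : ℤ))
  have hint := integrable_log_scaledNorm_alternatingCocycle (ν := ν) ha hb
  have hint' := hshift.integrable_comp_of_integrable (hint n)
  have hlog : ∀ ω, Real.log (scaledNorm (alternatingCocycle a b ω (m + n)))
      ≤ Real.log (scaledNorm (alternatingCocycle a b ω m))
        + Real.log (scaledNorm (alternatingCocycle a b (fun i => ω (2 * m + i)) n)) := fun ω => by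
    rw [← Real.log_mul (scaledNorm_pos _).ne' (scaledNorm_pos _).ne', mul_comm,
      alternatingCocycle_add]
    exact Real.log_le_log (scaledNorm_pos _) (scaledNorm_mul_le _ _)
  calc meanLogNorm ν a b (m + n)
      ≤ ∫ ω, (Real.log (scaledNorm (alternatingCocycle a b ω m))
          + Real.log (scaledNorm (alternatingCocycle a b (fun i => ω (2 * m + i)) n)))
          ∂(Measure.infinitePi fun _ => ν) :=
        integral_mono (hint _) ((hint m).add hint') hlog
    _ = meanLogNorm ν a b m + meanLogNorm ν a b n := by
        refine (integral_add (hint m) hint').trans (congrArg _ ?_)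
        exact integral_comp_of_measurePreserving hshift (hint n).aestronglyMeasurable

/-- The pairing of the ball indicator with its image under a matrix detects the norm of that
matrix, while the pairing with the averaged image decays like `q ^ k`. -/
theorem integral_inv_scaledNorm_pow_le (ha : Continuous a) (hb : Continuous b) {q : ℝ}
    (hq : 0 ≤ q) (hgap : ∀ F : Lp ℝ 2 (volume : Measure (ι → ℂ)),
      ‖koopmanMean ν a (koopmanMean ν b F)‖ ≤ q * ‖F‖) (k : ℕ) :
    ∫ ω, (scaledNorm (alternatingCocycle a b ω k) ^ (2 * Fintype.card ι))⁻¹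
      ∂(Measure.infinitePi fun _ => ν) ≤ q ^ k := by
  have hcont := continuous_alternatingCocycle ha hb k
  have hsmul := continuous_mk_smul hcont (ballIndicator ι)
  have hinv : Continuous fun ω =>
      (scaledNorm (alternatingCocycle a b ω k) ^ (2 * Fintype.card ι))⁻¹ :=
    ((continuous_scaledNorm.comp hcont).pow _).inv₀ fun _ => (pow_pos (scaledNorm_pos _) _).ne'
  refine le_of_mul_le_mul_right ?_ (pow_pos (norm_ballIndicator_pos (ι := ι)) 2)
  rw [← integral_mul_const]
  calc ∫ ω, (scaledNorm (alternatingCocycle a b ω k) ^ (2 * Fintype.card ι))⁻¹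
          * ‖ballIndicator ι‖ ^ 2 ∂(Measure.infinitePi fun _ => ν)
      ≤ ∫ ω, ⟪ballIndicator ι, DomMulAct.mk (alternatingCocycle a b ω k) • ballIndicator ι⟫_ℝ
          ∂(Measure.infinitePi fun _ => ν) :=
        integral_mono
          ((hinv.mul continuous_const).integrable_of_hasCompactSupport (.of_compactSpace _))
          ((continuous_const.inner hsmul).integrable_of_hasCompactSupport (.of_compactSpace _))
          fun ω => inv_pow_mul_norm_sq_le_inner_ballIndicator _
    _ = ⟪ballIndicator ι, ∫ ω, DomMulAct.mk (alternatingCocycle a b ω k) • ballIndicator ι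
          ∂(Measure.infinitePi fun _ => ν)⟫_ℝ :=
        integral_inner (hsmul.integrable_of_hasCompactSupport (.of_compactSpace _)) _
    _ ≤ ‖ballIndicator ι‖ * (q ^ k * ‖ballIndicator ι‖) := by
        grw [real_inner_le_norm, norm_integral_alternatingCocycle_smul_le ha hb hq hgap]
    _ = q ^ k * ‖ballIndicator ι‖ ^ 2 := by ring

theorem mul_neg_log_div_le_meanLogNorm (ha : Continuous a) (hb : Continuous b) {q : ℝ}
    (hq : 0 < q) (hgap : ∀ F : Lp ℝ 2 (volume : Measure (ι → ℂ)),
      ‖koopmanMean ν a (koopmanMean ν b F)‖ ≤ q * ‖F‖) (k : ℕ) :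
    k * (-Real.log q / (2 * Fintype.card ι)) ≤ meanLogNorm ν a b k := by
  let f (ω : ℤ → Z) : ℝ :=
    -(2 * Fintype.card ι) * Real.log (scaledNorm (alternatingCocycle a b ω k))
  have hf : Continuous f :=
    continuous_const.mul (continuous_log_scaledNorm_alternatingCocycle ha hb k)
  have hexp : ∀ ω, Real.exp (f ω)
      = (scaledNorm (alternatingCocycle a b ω k) ^ (2 * Fintype.card ι))⁻¹ := fun ω => by
    unfold f
    rw [neg_mul, Real.exp_neg, mul_comm, Real.exp_mul, Real.exp_log (scaledNorm_pos _)]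
    norm_cast
  have hjensen : Real.exp (∫ ω, f ω ∂(Measure.infinitePi fun _ => ν)) ≤ q ^ k := by
    refine (convexOn_exp.map_integral_le Real.continuous_exp.continuousOn isClosed_univ
      (ae_of_all _ fun _ => Set.mem_univ _)
      (hf.integrable_of_hasCompactSupport (.of_compactSpace _))
      ((Real.continuous_exp.comp hf).integrable_of_hasCompactSupport
        (.of_compactSpace _))).trans ?_
    simp only [hexp]
    exact integral_inv_scaledNorm_pow_le ha hb hq.le hgap k
  have hlog := (Real.le_log_iff_exp_le (pow_pos hq k)).2 hjensen
  rw [integral_const_mul, Real.log_pow] at hlog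
  rw [← mul_div_assoc, div_le_iff₀ (by positivity), meanLogNorm]
  linarith

theorem exists_pos_tendsto_integral_log_norm_alternatingCocycle (ha : Continuous a)
    (hb : Continuous b) {q : ℝ} (hq : 0 < q) (hq1 : q < 1)
    (hgap : ∀ F : Lp ℝ 2 (volume : Measure (ι → ℂ)),
      ‖koopmanMean ν a (koopmanMean ν b F)‖ ≤ q * ‖F‖) :
    ∃ γ : ℝ, 0 < γ ∧ Tendsto (fun k : ℕ =>
      (1 / (k : ℝ)) * ∫ ω, Real.log ‖(alternatingCocycle a b ω k).1‖
        ∂(Measure.infinitePi fun _ => ν)) atTop (𝓝 γ) := by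
  have hlog : 0 < -Real.log q / (2 * Fintype.card ι) :=
    div_pos (neg_pos.2 (Real.log_neg hq hq1)) (by positivity)
  have hlower := mul_neg_log_div_le_meanLogNorm (ν := ν) ha hb hq hgap
  have hsub := subadditive_meanLogNorm (ν := ν) ha hb
  have hlim := hsub.tendsto_lim ⟨0, Set.forall_mem_range.2 fun k =>
    div_nonneg (le_trans (by positivity) (hlower k)) (by positivity)⟩
  refine ⟨hsub.lim, hlog.trans_le (ge_of_tendsto hlim ?_), ?_⟩
  · filter_upwards [eventually_gt_atTop 0] with k hk
    rw [le_div_iff₀ (by positivity), mul_comm]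
    exact hlower k
  · rw [← sub_zero hsub.lim]
    refine (hlim.sub (tendsto_const_div_atTop_nhds_zero_nat
      (Real.log (Fintype.card ι)))).congr fun k => ?_
    simp only [log_norm_coe_unimodular]
    rw [integral_sub (integrable_log_scaledNorm_alternatingCocycle ha hb k)
      (integrable_const _), integral_const, probReal_univ, one_smul, ← sub_div, div_eq_inv_mul,
      one_div, meanLogNorm]

end LyapunovExponent

section HopfWeight

/-- The horizontal part `2 * conj α * β / (|α|² + |β|²)` of the Hopf fibration `ℂ² → S²`, a
function of the ratio `β / α` that follows its argument. -/
def hopfWeight (α β : ℂ) : ℂ :=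
  2 * conj α * β / (normSq α + normSq β : ℝ)

@[fun_prop]
theorem measurable_hopfWeight {X : Type*} [MeasurableSpace X] {f g : X → ℂ} (hf : Measurable f)
    (hg : Measurable g) : Measurable fun x => hopfWeight (f x) (g x) := by
  have := continuous_conj.measurable
  have := continuous_normSq.measurable
  unfold hopfWeight
  fun_prop

theorem norm_hopfWeight_le_one (α β : ℂ) : ‖hopfWeight α β‖ ≤ 1 := by
  rw [hopfWeight, norm_div, norm_mul, norm_mul, norm_conj, norm_real, normSq_eq_norm_sq,
    normSq_eq_norm_sq, Real.norm_of_nonneg (by positivity), Complex.norm_two]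
  refine div_le_one_of_le₀ ?_ (by positivity)
  linarith [two_mul_le_add_sq ‖α‖ ‖β‖]

theorem hopfWeight_circle_mul (α β : ℂ) (z : Circle) :
    hopfWeight α (z * β) = z * hopfWeight α β := by
  rw [hopfWeight, hopfWeight, normSq_mul, Circle.normSq_coe, one_mul]
  ring

theorem hopfWeight_neg_neg (α β : ℂ) : hopfWeight (-α) (-β) = hopfWeight α β := by
  simp [hopfWeight]

theorem hopfWeight_re (α β : ℂ) :
    (hopfWeight α β).re = 2 * (α.re * β.re + α.im * β.im) / (normSq α + normSq β) := by
  simp only [hopfWeight, div_ofReal_re, mul_re, mul_im, conj_re, conj_im, re_ofNat, im_ofNat]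
  ring

/-- With `c = (1 + r ^ 2) / (2 * r)`, the real parts of the two Hopf weights shifted by `± c` are,
up to a constant, a quotient of two quadratic forms and the inverse quotient. -/
theorem sub_re_hopfWeight_shear {t r : ℝ} (hr : r ≠ 0) (hrt : r ^ 2 + t ^ 2 = 1) {z w : ℂ}
    (hzw : normSq (t * z + r * w) + normSq w ≠ 0) :
    (1 + r ^ 2) / (2 * r) - (hopfWeight (t * z + r * w) w).re
      = t ^ 2 / (2 * r) * ((normSq (t * w - r * z) + normSq z)
        / (normSq (t * z + r * w) + normSq w)) := by
  rw [hopfWeight_re]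
  field_simp
  simp only [normSq_apply, add_re, add_im, sub_re, sub_im, re_ofReal_mul, im_ofReal_mul,
    re_mul_ofReal, im_mul_ofReal]
  linear_combination (2 * t * r * (z.re * w.re + z.im * w.im)
    - (1 - r ^ 2 + t ^ 2) * (w.re ^ 2 + w.im ^ 2)) * hrt

end HopfWeight

section TransferMatrix

open scoped Matrix

theorem norm_ec (x : Torus) : ‖ec x‖ = 1 :=
  Circle.norm_coe _

theorem continuous_ec : Continuous ec :=
  continuous_subtype_val.comp AddCircle.continuous_toCircle

theorem ec_add (x y : Torus) : ec (x + y) = ec x * ec y := by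
  rw [ec, AddCircle.toCircle_add, Circle.coe_mul, ec, ec]

/-- The right, upper triangular factor of the transfer matrix `T(θ, η)`. -/
def upperFactor (t r : ℝ) (θ : Torus) : unimodular (Fin 2) :=
  ⟨!![1, (r / t : ℝ) * (1 - ec θ); 0, ec θ], by
    rw [mem_unimodular, Matrix.det_fin_two_of, mul_zero, sub_zero, one_mul, norm_ec]⟩

/-- The left, lower triangular factor of the transfer matrix `T(θ, η)`. -/
def lowerFactor (t r : ℝ) (η : Torus) : unimodular (Fin 2) :=
  ⟨!![-ec (-η), 0; (r / t : ℝ) * (1 - ec (-η)), -1], by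
    rw [mem_unimodular, Matrix.det_fin_two_of, zero_mul, sub_zero, neg_mul_neg, mul_one, norm_ec]⟩

theorem continuous_upperFactor (t r : ℝ) : Continuous (upperFactor t r) := by
  have := continuous_ec
  refine Continuous.subtype_mk (continuous_matrix ?_) _
  simp only [Fin.forall_fin_two]
  exact ⟨⟨continuous_const, by fun_prop⟩, ⟨continuous_const, by fun_prop⟩⟩

theorem continuous_lowerFactor (t r : ℝ) : Continuous (lowerFactor t r) := by
  have := continuous_ec
  refine Continuous.subtype_mk (continuous_matrix ?_) _
  simp only [Fin.forall_fin_two]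
  exact ⟨⟨by fun_prop, continuous_const⟩, ⟨by fun_prop, continuous_const⟩⟩

variable {t r : ℝ}

theorem TmatA_eq_lowerFactor_mul_upperFactor (ht : t ≠ 0) (hrt : r ^ 2 + t ^ 2 = 1)
    (θ η : Torus) : TmatA t r θ η = (lowerFactor t r η * upperFactor t r θ).1 := by
  have htc : (t : ℂ) ≠ 0 := ofReal_ne_zero.2 ht
  have hc : (r : ℂ) ^ 2 + t ^ 2 = 1 := by exact_mod_cast hrt
  simp only [TmatA, Submonoid.coe_mul, upperFactor, lowerFactor, Matrix.mul_fin_two,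
    sub_eq_add_neg, ec_add]
  refine congr(!![$(?_), $(?_); $(?_), $(?_)]) <;> push_cast
  · ring
  · ring
  · ring
  · field_simp
    linear_combination ec θ * hc

theorem Phi_eq_alternatingCocycle (ht : t ≠ 0) (hrt : r ^ 2 + t ^ 2 = 1) (α : ℝ) (ω : ℤ → Torus)
    (k : ℕ) : Phi t r α ω k = (alternatingCocycle (fun θ => upperFactor t r (θ + α))
      (fun η => lowerFactor t r (η + α)) ω k).1 := by
  induction k with
  | zero => rfl
  | succ k ih =>
    rw [Phi, ih, TmatA_eq_lowerFactor_mul_upperFactor ht hrt]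
    rfl

theorem upperFactor_smul (t r : ℝ) (θ : Torus) (v : Fin 2 → ℂ) :
    upperFactor t r θ • v = ![v 0 + (r / t : ℝ) * (1 - ec θ) * v 1, ec θ * v 1] := by
  rw [unimodular_smul_def, upperFactor, Matrix.mulVec_fin_two]
  simp

theorem lowerFactor_smul (t r : ℝ) (η : Torus) (v : Fin 2 → ℂ) :
    lowerFactor t r η • v = ![-(ec (-η) * v 0), (r / t : ℝ) * (1 - ec (-η)) * v 0 - v 1] := by
  rw [unimodular_smul_def, lowerFactor, Matrix.mulVec_fin_two]
  simp [sub_eq_add_neg]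

/-- The Hopf weight in the coordinates that diagonalize every `upperFactor t r θ`. -/
def upperWeight (t r : ℝ) (v : Fin 2 → ℂ) : ℂ :=
  -hopfWeight (t * v 0 + r * v 1) (v 1)

/-- The Hopf weight in the coordinates that diagonalize every `lowerFactor t r η`. -/
def lowerWeight (t r : ℝ) (v : Fin 2 → ℂ) : ℂ :=
  hopfWeight (t * v 1 - r * v 0) (v 0)

theorem isEigenweight_upperWeight (ht : t ≠ 0) (r : ℝ) (α : Torus) :
    IsEigenweight (fun θ => upperFactor t r (θ + α)) (fun θ => AddCircle.toCircle (θ + α))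
      (upperWeight t r) where
  measurable := by
    unfold upperWeight
    fun_prop
  norm_le_one v := by
    rw [upperWeight, norm_neg]
    exact norm_hopfWeight_le_one _ _
  map_smul θ v := by
    have htc : (t : ℂ) ≠ 0 := ofReal_ne_zero.2 ht
    have hfix : t * (v 0 + (r / t : ℝ) * (1 - ec (θ + α)) * v 1) + r * (ec (θ + α) * v 1)
        = t * v 0 + r * v 1 := by
      push_cast
      field_simp
      ring
    rw [upperFactor_smul, upperWeight, upperWeight, mul_neg, ← hopfWeight_circle_mul]
    exact congrArg (fun α => -hopfWeight α _) hfix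

theorem isEigenweight_lowerWeight (ht : t ≠ 0) (r : ℝ) (α : Torus) :
    IsEigenweight (fun η => lowerFactor t r (η + α)) (fun η => AddCircle.toCircle (-(η + α)))
      (lowerWeight t r) where
  measurable := by
    unfold lowerWeight
    fun_prop
  norm_le_one v := by
    rw [lowerWeight]
    exact norm_hopfWeight_le_one _ _
  map_smul η v := by
    have htc : (t : ℂ) ≠ 0 := ofReal_ne_zero.2 ht
    have hneg : t * ((r / t : ℝ) * (1 - ec (-(η + α))) * v 0 - v 1) - r * -(ec (-(η + α)) * v 0)
        = -(t * v 1 - r * v 0) := by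
      push_cast
      field_simp
      ring
    rw [lowerFactor_smul, lowerWeight, lowerWeight, ← hopfWeight_circle_mul,
      ← hopfWeight_neg_neg (t * v 1 - r * v 0), ← hneg]
    rfl

end TransferMatrix

section GapInequality

theorem two_mul_sq_re_sub_one_le_re_sq {w : ℂ} (hw : ‖w‖ ≤ 1) : 2 * w.re ^ 2 - 1 ≤ (w ^ 2).re := by
  have hsq : ‖w‖ ^ 2 ≤ 1 := pow_le_one₀ (norm_nonneg w) hw
  rw [Complex.sq_norm, normSq_apply] at hsq
  rw [sq w, mul_re]
  linarith

theorem one_le_of_add_re_mul_add_re_eq {u v : ℂ} (hu : ‖u‖ ≤ 1) (hv : ‖v‖ ≤ 1) {c : ℝ}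
    (h : (c + u.re) * (c + v.re) = c ^ 2 - 1) :
    1 ≤ -(2 * c) * u.re + (-(2 * c) * v.re + (1 / 2 * (u ^ 2).re + 1 / 2 * (v ^ 2).re)) := by
  linarith [two_mul_sq_re_sub_one_le_re_sq hu, two_mul_sq_re_sub_one_le_re_sq hv,
    sq_nonneg (u.re + v.re)]

variable {t r : ℝ}

theorem normSq_mul_add_mul_add_normSq_ne_zero (ht : t ≠ 0) {z w : ℂ} (hzw : z ≠ 0 ∨ w ≠ 0) :
    normSq (t * z + r * w) + normSq w ≠ 0 := by
  intro h
  have hw : w = 0 := normSq_eq_zero.1 <| by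
    linarith [normSq_nonneg w, normSq_nonneg (t * z + r * w)]
  have hz : z = 0 := by simpa [hw, ht] using h
  exact hzw.elim (· hz) (· hw)

theorem add_re_upperWeight_mul_add_re_lowerWeight (ht : t ≠ 0) (hr : r ≠ 0)
    (hrt : r ^ 2 + t ^ 2 = 1) {v : Fin 2 → ℂ} (hv : v ≠ 0) :
    ((1 + r ^ 2) / (2 * r) + (upperWeight t r v).re)
      * ((1 + r ^ 2) / (2 * r) + (lowerWeight t r v).re) = ((1 + r ^ 2) / (2 * r)) ^ 2 - 1 := by
  have hv' : v 0 ≠ 0 ∨ v 1 ≠ 0 := by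
    simpa [funext_iff, Fin.forall_fin_two, imp_iff_not_or] using hv
  set U := normSq (t * v 0 + r * v 1) + normSq (v 1) with hU
  set L := normSq (t * v 1 - r * v 0) + normSq (v 0) with hL
  have hU0 : U ≠ 0 := normSq_mul_add_mul_add_normSq_ne_zero ht hv'
  have hL0 : L ≠ 0 := by
    simpa [hL, sub_eq_add_neg] using
      normSq_mul_add_mul_add_normSq_ne_zero (r := -r) ht hv'.symm
  have hupper : (1 + r ^ 2) / (2 * r) + (upperWeight t r v).re = t ^ 2 / (2 * r) * (L / U) := by
    rw [upperWeight, neg_re, ← sub_eq_add_neg, sub_re_hopfWeight_shear hr hrt hU0]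
  have hlower : (1 + r ^ 2) / (2 * r) + (lowerWeight t r v).re = t ^ 2 / (2 * r) * (U / L) := by
    have h := sub_re_hopfWeight_shear (t := t) (z := v 1) (w := v 0) (neg_ne_zero.2 hr)
      (by rw [neg_sq, hrt]) (by simpa [hL, sub_eq_add_neg] using hL0)
    simp only [ofReal_neg, neg_mul, ← sub_eq_add_neg, sub_neg_eq_add, neg_sq, mul_neg, div_neg,
      ← hU, ← hL] at h
    rw [lowerWeight]
    linear_combination -h
  rw [hupper, hlower, eq_sub_of_add_eq' hrt]
  field_simp
  ring

end GapInequality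

section TwoPointSupport

theorem norm_integral_coe_circle_lt_one {Z : Type*} [TopologicalSpace Z] [MeasurableSpace Z]
    [HereditarilyLindelofSpace Z] {ν : Measure Z} [IsProbabilityMeasure ν] {e : Z → Circle}
    (he : Continuous e) {x y : Z} (hx : x ∈ ν.support) (hy : y ∈ ν.support) (hxy : e x ≠ e y) :
    ‖∫ z, (e z : ℂ) ∂ν‖ < 1 :=
  norm_integral_lt_of_mem_support (continuous_subtype_val.comp he)
    (fun _ => (Circle.norm_coe _).le) hx hy (Circle.coe_injective.ne hxy)

theorem toCircle_sq_ne_toCircle_sq {T : ℝ} (hT : T ≠ 0) {x y : AddCircle T}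
    (hxy : 2 • x ≠ 2 • y) : AddCircle.toCircle x ^ 2 ≠ AddCircle.toCircle y ^ 2 := by
  rw [← AddCircle.toCircle_nsmul, ← AddCircle.toCircle_nsmul]
  exact (AddCircle.injective_toCircle hT).ne hxy

theorem exists_two_nsmul_ne_two_nsmul {T : ℝ} [hT : Fact (0 < T)] {U : Set (AddCircle T)}
    (hU : (interior U).Nonempty) : ∃ x ∈ U, ∃ y ∈ U, 2 • x ≠ 2 • y := by
  obtain ⟨x, hx⟩ := hU
  have hUx : U ∈ 𝓝 x := mem_interior_iff_mem_nhds.1 hx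
  have : Infinite (Set.Ico (0 : ℝ) (0 + T)) :=
    (Set.Ico_infinite (lt_add_of_pos_right 0 hT.out)).to_subtype
  have : Nontrivial (AddCircle T) := (AddCircle.equivIco T 0).nontrivial
  have hinf : U.Infinite := infinite_of_mem_nhds x hUx
  by_contra! h
  refine hinf (((AddCircle.finite_torsion T two_pos).image (· + x)).subset fun y hy => ?_)
  exact ⟨y - x, by simp [smul_sub, h y hy x (mem_of_mem_nhds hUx)], sub_add_cancel y x⟩

theorem measSupport_eq_support (ν : Measure Torus) : measSupport ν = ν.support :=
  Set.ext fun x => (Measure.mem_support_iff_forall x).symm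

variable {t r : ℝ} {ν : Measure Torus} [IsProbabilityMeasure ν] {x y : Torus}

theorem exists_norm_koopmanMean_lowerFactor_upperFactor_le (ht : t ≠ 0) (hr : r ≠ 0)
    (hrt : r ^ 2 + t ^ 2 = 1) (hx : x ∈ ν.support) (hy : y ∈ ν.support) (hxy : 2 • x ≠ 2 • y)
    (α : Torus) :
    ∃ q : ℝ, 0 < q ∧ q < 1 ∧ ∀ F : Lp ℝ 2 (volume : Measure (Fin 2 → ℂ)),
      ‖koopmanMean ν (fun θ => upperFactor t r (θ + α))
        (koopmanMean ν (fun η => lowerFactor t r (η + α)) F)‖ ≤ q * ‖F‖ := by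
  have hup := isEigenweight_upperWeight ht r α
  have hlow := isEigenweight_lowerWeight ht r α
  have hne : ∀ᵐ v : Fin 2 → ℂ, v ≠ 0 := Measure.ae_ne volume 0
  let e (θ : Torus) : Circle := AddCircle.toCircle (θ + α)
  let e' (η : Torus) : Circle := AddCircle.toCircle (-(η + α))
  have he : Continuous e := by fun_prop
  have he' : Continuous e' := by fun_prop
  have hsq : e x ^ 2 ≠ e y ^ 2 := toCircle_sq_ne_toCircle_sq Real.two_pi_pos.ne' <| by
    simpa only [smul_add, ne_eq, add_left_inj]
  have hsq' : e' x ^ 2 ≠ e' y ^ 2 := toCircle_sq_ne_toCircle_sq Real.two_pi_pos.ne' <| by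
    simpa only [smul_neg, smul_add, ne_eq, neg_inj, add_left_inj]
  have hmean {f : Torus → Circle} (hf : Continuous f) (hfxy : f x ≠ f y) :=
    norm_integral_coe_circle_lt_one hf hx hy hfxy
  refine exists_norm_koopmanMean_koopmanMean_le
    (e := ![e, e', e ^ 2, e' ^ 2])
    (w := ![upperWeight t r, lowerWeight t r, upperWeight t r ^ 2, lowerWeight t r ^ 2])
    (c := ![-(2 * ((1 + r ^ 2) / (2 * r))), -(2 * ((1 + r ^ 2) / (2 * r))), 1 / 2, 1 / 2])
    ((continuous_upperFactor t r).comp (continuous_add_const α))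
    ((continuous_lowerFactor t r).comp (continuous_add_const α)) ?_ ?_ ?_ ?_
  · simpa [Fin.forall_fin_succ] using ⟨he, he', he.pow 2, he'.pow 2⟩
  · simpa [Fin.forall_fin_succ] using ⟨hmean he (ne_of_apply_ne (· ^ 2) hsq),
      hmean he' (ne_of_apply_ne (· ^ 2) hsq'), hmean (he.pow 2) hsq, hmean (he'.pow 2) hsq'⟩
  · simpa [Fin.forall_fin_succ] using ⟨.inl hup, .inr hlow, .inl hup.sq, .inr hlow.sq⟩
  · filter_upwards [hne] with v hv
    simpa [Fin.sum_univ_succ] using one_le_of_add_re_mul_add_re_eq (hup.norm_le_one v)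
      (hlow.norm_le_one v) (add_re_upperWeight_mul_add_re_lowerWeight ht hr hrt hv)

end TwoPointSupport

theorem lyapunov_positive_general {t r : ℝ} (ht : t ≠ 0) (hr : r ≠ 0) (hrt : r ^ 2 + t ^ 2 = 1)
    {ν : Measure Torus} [IsProbabilityMeasure ν] {x y : Torus} (hx : x ∈ measSupport ν)
    (hy : y ∈ measSupport ν) (hxy : 2 • x ≠ 2 • y) {ℙ : Measure (ℤ → Torus)}
    (hiid : ∀ (s : Finset ℤ) (A : ℤ → Set Torus), (∀ k, MeasurableSet (A k)) →
      ℙ {ω | ∀ k ∈ s, ω k ∈ A k} = ∏ k ∈ s, ν (A k)) (α : ℝ) :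
    ∃ γ : ℝ, 0 < γ ∧
      Tendsto (fun k : ℕ => (1 / (k : ℝ)) * ∫ ω, Real.log ‖Phi t r α ω k‖ ∂ℙ) atTop (𝓝 γ) := by
  rw [measSupport_eq_support] at hx hy
  obtain ⟨q, hq, hq1, hgap⟩ :=
    exists_norm_koopmanMean_lowerFactor_upperFactor_le ht hr hrt hx hy hxy α
  simp only [Phi_eq_alternatingCocycle ht hrt, Measure.eq_infinitePi (fun _ => ν) hiid]
  exact exists_pos_tendsto_integral_log_norm_alternatingCocycle
    ((continuous_upperFactor t r).comp (continuous_add_const _))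
    ((continuous_lowerFactor t r).comp (continuous_add_const _)) hq hq1 hgap

/-- If `supp ν` has nonempty interior, then for every `α ∈ ℝ` the
Lyapunov exponent `γ(e^{iα}) = lim (1/k) 𝔼[log ‖Φ(k,·)‖]` exists and is strictly positive. -/
theorem lyapunov_positive
    (t r : ℝ) (ht0 : 0 < t) (ht1 : t < 1) (hr0 : 0 < r) (hr1 : r < 1)
    (hrt : r^2 + t^2 = 1)
    (ν : Measure Torus) [IsProbabilityMeasure ν]
    (hsupp : (interior (measSupport ν)).Nonempty)
    (ℙ : Measure (ℤ → Torus)) [IsProbabilityMeasure ℙ]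
    (hiid : ∀ (s : Finset ℤ) (A : ℤ → Set Torus), (∀ k, MeasurableSet (A k)) →
      ℙ {ω | ∀ k ∈ s, ω k ∈ A k} = ∏ k ∈ s, ν (A k)) :
    ∀ α : ℝ, ∃ γ : ℝ, 0 < γ ∧
      Tendsto (fun k : ℕ => (1/(k:ℝ)) * ∫ ω, Real.log ‖Phi t r α ω k‖ ∂ℙ)
        atTop (nhds γ) := by
  obtain ⟨x, hx, y, hy, hxy⟩ := exists_two_nsmul_ne_two_nsmul hsupp
  exact lyapunov_positive_general ht0.ne' hr0.ne' hrt hx hy hxy hiid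

end
end

section
/- Fix real numbers t, r with 0 < t < 1, 0 < r < 1 and r² + t² = 1. For every sequence of phases θ = (θ_k)_{k∈ℤ}, the pair of vectors e_{−1}, e_0 is cyclic for U_θ: the closed linear span of { U_θ^n e_{−1} : n ∈ ℤ } ∪ { U_θ^n e_0 : n ∈ ℤ } equals all of ℓ²(ℤ;ℂ). -/
/-!
Up to the factor `r² + t²` and the diagonal part `d`, the operator `S` maps
`t e_{2m-1} + r e_{2m}` to `r e_{2m} - t e_{2m+1}` and `r e_{2m+1} - t e_{2m+2}` to
`t e_{2m} + r e_{2m+1}`. So if a subspace is invariant under `U` and `U⁻¹` and contains `e_k`,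
then it contains `e_{k-1}` if and only if it contains `e_{k+1}`. Two consecutive basis vectors
therefore propagate in both directions to the whole basis.
-/

open MeasureTheory Complex Filter

noncomputable section

/-- `ℓ²(ℤ;ℂ)`. -/
abbrev Hz : Type := lp (fun _ : ℤ => ℂ) 2

/-- Canonical orthonormal basis of `ℓ²(ℤ;ℂ)`. -/
def ez (k : ℤ) : Hz := lp.single 2 k (1 : ℂ)

/-- Matrix entries of the operator `S(t)`: `Sent t r k j = ⟨e_k, S e_j⟩`. -/
def Sent (t r : ℝ) (k j : ℤ) : ℂ :=
  if k % 2 = 0 then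
    (if j = k - 1 then (r*t : ℝ) else if j = k then (r^2 : ℝ)
     else if j = k + 1 then (r*t : ℝ) else if j = k + 2 then (-t^2 : ℝ) else 0)
  else
    (if j = k - 2 then (-t^2 : ℝ) else if j = k - 1 then (-(r*t) : ℝ)
     else if j = k then (r^2 : ℝ) else if j = k + 1 then (-(r*t) : ℝ) else 0)

section OrbitSpan

variable {R E : Type*} [Semiring R] [AddCommMonoid E] [Module R E] [TopologicalSpace E]

/-- The two-sided orbit `{Uⁿ a : n ∈ ℤ}` of a vector under an invertible continuous
linear operator. -/
def zpowOrbit (U : (E →L[R] E)ˣ) (a : E) : Set E :=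
  {x | ∃ n : ℤ, x = ((U ^ n : (E →L[R] E)ˣ) : E →L[R] E) a}

lemma self_mem_zpowOrbit (U : (E →L[R] E)ˣ) (a : E) : a ∈ zpowOrbit U a :=
  ⟨0, by simp⟩

lemma zpow_apply_mem_zpowOrbit (U : (E →L[R] E)ˣ) {a x : E} (hx : x ∈ zpowOrbit U a) (p : ℤ) :
    ((U ^ p : (E →L[R] E)ˣ) : E →L[R] E) x ∈ zpowOrbit U a := by
  obtain ⟨n, rfl⟩ := hx
  exact ⟨p + n, by rw [zpow_add, Units.val_mul, mul_apply_eq_comp]⟩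

lemma apply_mem_span_iff (U : (E →L[R] E)ˣ) {s : Set E}
    (hs : ∀ x ∈ s, (U : E →L[R] E) x ∈ s)
    (hs' : ∀ x ∈ s, ((U⁻¹ : (E →L[R] E)ˣ) : E →L[R] E) x ∈ s) (x : E) :
    (U : E →L[R] E) x ∈ Submodule.span R s ↔ x ∈ Submodule.span R s := by
  have map_mem {A : E →L[R] E} (hA : ∀ x ∈ s, A x ∈ s) {y : E}
      (hy : y ∈ Submodule.span R s) : A y ∈ Submodule.span R s :=
    Submodule.span_mono (Set.image_subset_iff.2 hA)
      (Submodule.apply_mem_span_image_of_mem_span (A : E →ₗ[R] E) hy)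
  refine ⟨fun hx ↦ ?_, map_mem hs⟩
  exact (ContinuousLinearEquiv.unitsEquiv R E U).symm_apply_apply x ▸ map_mem hs' hx

lemma apply_mem_span_zpowOrbit_union_iff (U : (E →L[R] E)ˣ) (a b x : E) :
    (U : E →L[R] E) x ∈ Submodule.span R (zpowOrbit U a ∪ zpowOrbit U b) ↔
      x ∈ Submodule.span R (zpowOrbit U a ∪ zpowOrbit U b) := by
  have zpow_mem (p : ℤ) : ∀ y ∈ zpowOrbit U a ∪ zpowOrbit U b,
      ((U ^ p : (E →L[R] E)ˣ) : E →L[R] E) y ∈ zpowOrbit U a ∪ zpowOrbit U b :=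
    fun _ hy ↦ hy.imp (zpow_apply_mem_zpowOrbit U · p) (zpow_apply_mem_zpowOrbit U · p)
  exact apply_mem_span_iff U (by simpa only [zpow_one] using zpow_mem 1)
    (by simpa only [zpow_neg_one] using zpow_mem (-1)) x

end OrbitSpan

lemma forall_int_of_consecutive {P : ℤ → Prop} (hP : ∀ k, P k → (P (k - 1) ↔ P (k + 1)))
    {b : ℤ} (hb : P b) (hb' : P (b + 1)) (k : ℤ) : P k := by
  suffices P k ∧ P (k + 1) from this.1
  induction k using Int.inductionOn' (b := b) with
  | zero => exact ⟨hb, hb'⟩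
  | succ k _ ih => exact ⟨ih.2, (hP _ ih.2).1 (by rw [add_sub_cancel_right]; exact ih.1)⟩
  | pred k _ ih => exact ⟨(hP _ ih.1).2 ih.2, by rw [sub_add_cancel]; exact ih.1⟩

lemma ez_apply (k j : ℤ) : ez k j = if j = k then 1 else 0 := by
  rw [ez, lp.single_apply, Pi.single_apply]

lemma mul_ez_apply (d : ℤ → ℂ) (j k : ℤ) : d k * ez j k = d j * ez j k := by
  rw [ez_apply]
  split_ifs with hkj
  · rw [hkj]
  · rw [mul_zero, mul_zero]

lemma inner_ez_left (k : ℤ) (x : Hz) : inner (𝕜 := ℂ) (ez k) x = x k := by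
  rw [ez, lp.inner_single_left, RCLike.inner_apply, map_one, mul_one]

lemma topologicalClosure_span_range_ez :
    (Submodule.span ℂ (Set.range ez)).topologicalClosure = ⊤ := by
  let b : HilbertBasis ℤ ℂ Hz := .ofRepr (.refl ℂ Hz)
  have hb : ⇑b = ez := funext fun k ↦ (b.repr_symm_single k).symm
  exact hb ▸ b.dense_span

lemma Sent_comb_add (t r : ℝ) (m k : ℤ) :
    t * Sent t r k (2 * m - 1) + r * Sent t r k (2 * m) =
      (r ^ 2 + t ^ 2) * (r * ez (2 * m) k - t * ez (2 * m + 1) k) := by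
  simp only [Sent, ez_apply]
  split_ifs <;> first | omega | (push_cast; ring)

lemma Sent_comb_sub (t r : ℝ) (m k : ℤ) :
    r * Sent t r k (2 * m + 1) - t * Sent t r k (2 * m + 2) =
      (r ^ 2 + t ^ 2) * (t * ez (2 * m) k + r * ez (2 * m + 1) k) := by
  simp only [Sent, ez_apply]
  split_ifs <;> first | omega | (push_cast; ring)

/-- `U = D S` with `D` the diagonal operator with entries `d`, expressed through matrix elements;
`d k = exp (-i θ_k)` gives `U_θ`. -/
def IsDiagMulS (t r : ℝ) (d : ℤ → ℂ) (U : Hz →L[ℂ] Hz) : Prop :=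
  ∀ k j : ℤ, inner (𝕜 := ℂ) (ez k) (U (ez j)) = d k * Sent t r k j

namespace IsDiagMulS

variable {t r : ℝ} {d : ℤ → ℂ} {U : Hz →L[ℂ] Hz}

lemma map_ez_apply (hU : IsDiagMulS t r d U) (k j : ℤ) : U (ez j) k = d k * Sent t r k j := by
  rw [← inner_ez_left, hU]

lemma diag_ne_zero (hU : IsDiagMulS t r d U) (hsurj : Function.Surjective U) (k : ℤ) :
    d k ≠ 0 := by
  intro hdk
  have row_eq_zero : (innerSL ℂ (ez k)).comp U = 0 := by
    refine ContinuousLinearMap.ext_on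
      (Submodule.dense_iff_topologicalClosure_eq_top.2 topologicalClosure_span_range_ez) ?_
    rintro _ ⟨j, rfl⟩
    simp [hU k j, hdk]
  obtain ⟨x, hx⟩ := hsurj (ez k)
  have ez_self_eq_zero : inner (𝕜 := ℂ) (ez k) (U x) = 0 := DFunLike.congr_fun row_eq_zero x
  rw [hx, inner_ez_left, ez_apply, if_pos rfl] at ez_self_eq_zero
  exact one_ne_zero ez_self_eq_zero

lemma map_comb_add (hU : IsDiagMulS t r d U) (m : ℤ) :
    U ((t : ℂ) • ez (2 * m - 1) + (r : ℂ) • ez (2 * m)) = ((r : ℂ) ^ 2 + (t : ℂ) ^ 2) •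
      ((r * d (2 * m)) • ez (2 * m) - (t * d (2 * m + 1)) • ez (2 * m + 1)) := by
  ext k
  simp only [map_add, map_smul, lp.coeFn_add, lp.coeFn_sub, lp.coeFn_smul, Pi.add_apply,
    Pi.sub_apply, Pi.smul_apply, smul_eq_mul, hU.map_ez_apply]
  linear_combination d k * Sent_comb_add t r m k + ((r : ℂ) ^ 2 + (t : ℂ) ^ 2) *
    (r * mul_ez_apply d (2 * m) k - t * mul_ez_apply d (2 * m + 1) k)

lemma map_comb_sub (hU : IsDiagMulS t r d U) (m : ℤ) :
    U ((r : ℂ) • ez (2 * m + 1) - (t : ℂ) • ez (2 * m + 2)) = ((r : ℂ) ^ 2 + (t : ℂ) ^ 2) •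
      ((t * d (2 * m)) • ez (2 * m) + (r * d (2 * m + 1)) • ez (2 * m + 1)) := by
  ext k
  simp only [map_sub, map_smul, lp.coeFn_add, lp.coeFn_sub, lp.coeFn_smul, Pi.add_apply,
    Pi.sub_apply, Pi.smul_apply, smul_eq_mul, hU.map_ez_apply]
  linear_combination d k * Sent_comb_sub t r m k + ((r : ℂ) ^ 2 + (t : ℂ) ^ 2) *
    (t * mul_ez_apply d (2 * m) k + r * mul_ez_apply d (2 * m + 1) k)

lemma ez_sub_one_mem_iff_ez_add_one_mem (hU : IsDiagMulS t r d U) (ht : t ≠ 0)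
    (hd : ∀ k, d k ≠ 0) {V : Submodule ℂ Hz} (hV : ∀ x, U x ∈ V ↔ x ∈ V) (k : ℤ)
    (hk : ez k ∈ V) : ez (k - 1) ∈ V ↔ ez (k + 1) ∈ V := by
  have ht' : (t : ℂ) ≠ 0 := mod_cast ht
  have hrt : (r : ℂ) ^ 2 + (t : ℂ) ^ 2 ≠ 0 := mod_cast (by positivity : r ^ 2 + t ^ 2 ≠ 0)
  obtain ⟨m, rfl | rfl⟩ := k.even_or_odd'
  · calc ez (2 * m - 1) ∈ V
      _ ↔ (t : ℂ) • ez (2 * m - 1) + (r : ℂ) • ez (2 * m) ∈ V := by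
        rw [V.add_mem_iff_left (V.smul_mem _ hk), V.smul_mem_iff ht']
      _ ↔ (r * d (2 * m)) • ez (2 * m) - (t * d (2 * m + 1)) • ez (2 * m + 1) ∈ V := by
        rw [← hV, hU.map_comb_add, V.smul_mem_iff hrt]
      _ ↔ ez (2 * m + 1) ∈ V := by
        rw [V.sub_mem_iff_right (V.smul_mem _ hk), V.smul_mem_iff (mul_ne_zero ht' (hd _))]
  · rw [add_sub_cancel_right, add_assoc, one_add_one_eq_two]
    calc ez (2 * m) ∈ V
      _ ↔ (t * d (2 * m)) • ez (2 * m) + (r * d (2 * m + 1)) • ez (2 * m + 1) ∈ V := by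
        rw [V.add_mem_iff_left (V.smul_mem _ hk), V.smul_mem_iff (mul_ne_zero ht' (hd _))]
      _ ↔ (r : ℂ) • ez (2 * m + 1) - (t : ℂ) • ez (2 * m + 2) ∈ V := by
        rw [← hV (_ - _), hU.map_comb_sub, V.smul_mem_iff hrt]
      _ ↔ ez (2 * m + 2) ∈ V := by
        rw [V.sub_mem_iff_right (V.smul_mem _ hk), V.smul_mem_iff ht']

end IsDiagMulS

theorem cyclic_pair_Z_general {t r : ℝ} (ht : t ≠ 0) {d : ℤ → ℂ} (U : (Hz →L[ℂ] Hz)ˣ)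
    (hU : IsDiagMulS t r d U) (b : ℤ) :
    (Submodule.span ℂ (zpowOrbit U (ez b) ∪ zpowOrbit U (ez (b + 1)))).topologicalClosure = ⊤ := by
  have hd : ∀ k, d k ≠ 0 := hU.diag_ne_zero (ContinuousLinearEquiv.unitsEquiv ℂ Hz U).surjective
  have ez_mem : ∀ k, ez k ∈ Submodule.span ℂ (zpowOrbit U (ez b) ∪ zpowOrbit U (ez (b + 1))) :=
    forall_int_of_consecutive
      (hU.ez_sub_one_mem_iff_ez_add_one_mem ht hd (apply_mem_span_zpowOrbit_union_iff U _ _))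
      (Submodule.subset_span (.inl (self_mem_zpowOrbit U _)))
      (Submodule.subset_span (.inr (self_mem_zpowOrbit U _)))
  rw [eq_top_iff, ← topologicalClosure_span_range_ez]
  exact Submodule.topologicalClosure_mono (Submodule.span_le.2 (Set.range_subset_iff.2 ez_mem))

/-- The pair `e_{-1}, e_0` is cyclic for `U_θ = D_θ S`:
the closed span of `{U_θ^n e_{-1} : n ∈ ℤ} ∪ {U_θ^n e_0 : n ∈ ℤ}` is all of `ℓ²(ℤ;ℂ)`. -/
theorem cyclic_pair_Z
    (t r : ℝ) (ht0 : 0 < t) (ht1 : t < 1) (hr0 : 0 < r) (hr1 : r < 1)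
    (hrt : r^2 + t^2 = 1)
    (θ : ℤ → ℝ)
    (Uu : (Hz →L[ℂ] Hz)ˣ)
    (hU : ∀ k j : ℤ, inner (𝕜 := ℂ) (ez k) ((Uu : Hz →L[ℂ] Hz) (ez j)) =
      Complex.exp (-(θ k : ℂ) * Complex.I) * Sent t r k j) :
    (Submodule.span ℂ
      ({x : Hz | ∃ n : ℤ, x = ((Uu ^ n : (Hz →L[ℂ] Hz)ˣ) : Hz →L[ℂ] Hz) (ez (-1))} ∪
       {x : Hz | ∃ n : ℤ, x = ((Uu ^ n : (Hz →L[ℂ] Hz)ˣ) : Hz →L[ℂ] Hz) (ez 0)})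
      ).topologicalClosure = ⊤ := by
  exact cyclic_pair_Z_general ht0.ne' Uu hU (-1)

end
end

section
/- Fix real numbers t, r with 0 < t < 1, 0 < r < 1 and r² + t² = 1. For every sequence of phases θ = (θ_k)_{k∈ℕ₀}, the vector e₀ is cyclic for U⁺_θ: the closed linear span of { (U⁺_θ)^n e_0 : n ∈ ℤ } equals all of ℓ²(ℕ₀;ℂ). -/
open MeasureTheory Complex Filter

noncomputable section

/-- `ℓ²(ℕ₀;ℂ)`. -/
abbrev Hn : Type := lp (fun _ : ℕ => ℂ) 2

/-- Canonical orthonormal basis of `ℓ²(ℕ₀;ℂ)`. -/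
def en (k : ℕ) : Hn := lp.single 2 k (1 : ℂ)

/-- Matrix entries of the half-lattice operator `S⁺`: `Spent t r k j = ⟨e_k, S⁺ e_j⟩`. -/
def Spent (t r : ℝ) (k j : ℕ) : ℂ :=
  if k = 0 then
    (if j = 0 then (-r : ℝ) else if j = 1 then (r*t : ℝ) else if j = 2 then (-t^2 : ℝ) else 0)
  else if k = 1 then
    (if j = 0 then (t : ℝ) else if j = 1 then (r^2 : ℝ) else if j = 2 then (-(r*t) : ℝ) else 0)
  else if k % 2 = 0 then
    (if j + 1 = k then (r*t : ℝ) else if j = k then (r^2 : ℝ)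
     else if j = k + 1 then (r*t : ℝ) else if j = k + 2 then (-t^2 : ℝ) else 0)
  else
    (if j + 2 = k then (-t^2 : ℝ) else if j + 1 = k then (-(r*t) : ℝ)
     else if j = k then (r^2 : ℝ) else if j = k + 1 then (-(r*t) : ℝ) else 0)

/-!
Let `W` be the span of the two-sided orbit of `e₀`; both `U` and `U⁻¹` preserve it. If `W` contains
`e_{2k}` and `e_{2k+1}`, then it contains `e_{2k+2}`, because `U` maps `r e_{2k+1} - t e_{2k+2}`
into the span of `e_{2k}` and `e_{2k+1}` (apply `U⁻¹`), and then `e_{2k+3}`, the last basis vector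
occurring in `U e_{2k+1}` (apply `U`). Hence `W` contains every basis vector, and is dense.
-/

section SpanOrbit

open scoped Pointwise

variable {G R M : Type*} [Group G] [Semiring R] [AddCommMonoid M] [Module R M]
  [DistribMulAction G M] [SMulCommClass G R M]

theorem smul_mem_span_orbit_iff (g : G) (x y : M) :
    g • y ∈ Submodule.span R (MulAction.orbit G x) ↔
      y ∈ Submodule.span R (MulAction.orbit G x) := by
  conv_lhs => rw [← MulAction.smul_orbit g x, ← Submodule.smul_span]
  exact Set.smul_mem_smul_set_iff

end SpanOrbit

theorem setOf_exists_zpow_apply_eq_orbit {R M : Type*} [Semiring R] [AddCommMonoid M] [Module R M]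
    [TopologicalSpace M] [ContinuousAdd M] (U : (M →L[R] M)ˣ) (v : M) :
    {x : M | ∃ n : ℤ, x = ((U ^ n : (M →L[R] M)ˣ) : M →L[R] M) v} =
      MulAction.orbit (Subgroup.zpowers U) v := by
  ext x
  simp only [Set.mem_ofPred_eq, MulAction.mem_orbit_iff, Subgroup.exists_zpowers, eq_comm (a := x)]
  rfl

theorem mem_of_add_smul_mem {K M : Type*} [DivisionRing K] [AddCommGroup M] [Module K M]
    {W : Submodule K M} {a : K} {x y : M} (ha : a ≠ 0) (hx : x ∈ W) (hxy : x + a • y ∈ W) :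
    y ∈ W :=
  (W.smul_mem_iff ha).1 ((W.add_mem_iff_right hx).1 hxy)

theorem inner_en_left (k : ℕ) (x : Hn) : inner ℂ (en k) x = x k := by
  simp [en, lp.inner_single_left]

theorem inner_en_en (k j : ℕ) : inner ℂ (en k) (en j) = if k = j then 1 else 0 := by
  rw [inner_en_left, en, lp.single_apply, Pi.single_apply]

theorem en_ne_zero (k : ℕ) : en k ≠ 0 := fun h ↦ by
  simpa [h] using inner_en_en k k

theorem ext_inner_en {x y : Hn} (h : ∀ k, inner ℂ (en k) x = inner ℂ (en k) y) : x = y := by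
  ext k
  simpa only [inner_en_left] using h k

theorem topologicalClosure_span_range_en :
    (Submodule.span ℂ (Set.range en)).topologicalClosure = ⊤ := by
  let b : HilbertBasis ℕ ℂ Hn := .ofRepr (.refl ℂ Hn)
  have hb : ⇑b = en := funext fun k ↦ b.repr_symm_single k |>.symm
  exact hb ▸ b.dense_span

theorem exists_inner_apply_en_ne_zero {E : Type*} [NormedAddCommGroup E] [InnerProductSpace ℂ E]
    {A : Hn →L[ℂ] E} (hA : Function.Surjective A) {y : E} (hy : y ≠ 0) :
    ∃ j, inner ℂ y (A (en j)) ≠ 0 := by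
  by_contra! h_zero
  have h_dense : Dense (Submodule.span ℂ (Set.range en) : Set Hn) :=
    Submodule.dense_iff_topologicalClosure_eq_top.2 topologicalClosure_span_range_en
  have h_functional : innerSL ℂ y ∘L A = 0 :=
    ContinuousLinearMap.ext_on h_dense (Set.forall_mem_range.2 h_zero)
  obtain ⟨x, rfl⟩ := hA y
  exact hy (inner_self_eq_zero.1 (DFunLike.congr_fun h_functional x))

theorem spent_zero_right (t r : ℝ) (k : ℕ) :
    Spent t r k 0 = if k = 0 then (-r : ℂ) else if k = 1 then (t : ℂ) else 0 := by
  simp only [Spent]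
  push_cast
  grind

theorem spent_two_mul_add_one_right (t r : ℝ) (k m : ℕ) :
    Spent t r k (2 * m + 1) =
      if k = 2 * m then (r * t : ℂ) else if k = 2 * m + 1 then (r ^ 2 : ℂ)
      else if k = 2 * m + 2 then (r * t : ℂ) else if k = 2 * m + 3 then (-t ^ 2 : ℂ) else 0 := by
  simp only [Spent]
  push_cast
  grind

theorem spent_two_mul_add_two_right (t r : ℝ) (k m : ℕ) :
    Spent t r k (2 * m + 2) =
      if k = 2 * m then (-t ^ 2 : ℂ) else if k = 2 * m + 1 then (-(r * t) : ℂ)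
      else if k = 2 * m + 2 then (r ^ 2 : ℂ) else if k = 2 * m + 3 then (-(r * t) : ℂ) else 0 := by
  simp only [Spent]
  push_cast
  grind

section WeightedOperator

variable {t r : ℝ} {d : ℕ → ℂ} {A : Hn →ₗ[ℂ] Hn}

theorem apply_en_zero (hA : ∀ k j, inner ℂ (en k) (A (en j)) = d k * Spent t r k j) :
    A (en 0) = (-r * d 0) • en 0 + (t * d 1) • en 1 := by
  refine ext_inner_en fun k ↦ ?_
  simp only [hA, spent_zero_right, inner_add_right, inner_smul_right, inner_en_en]
  grind

theorem apply_en_two_mul_add_one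
    (hA : ∀ k j, inner ℂ (en k) (A (en j)) = d k * Spent t r k j) (m : ℕ) :
    A (en (2 * m + 1)) =
      (r * t * d (2 * m)) • en (2 * m) + (r ^ 2 * d (2 * m + 1)) • en (2 * m + 1) +
        (r * t * d (2 * m + 2)) • en (2 * m + 2) + (-t ^ 2 * d (2 * m + 3)) • en (2 * m + 3) := by
  refine ext_inner_en fun k ↦ ?_
  simp only [hA, spent_two_mul_add_one_right, inner_add_right, inner_smul_right, inner_en_en]
  grind

theorem apply_en_two_mul_add_two
    (hA : ∀ k j, inner ℂ (en k) (A (en j)) = d k * Spent t r k j) (m : ℕ) :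
    A (en (2 * m + 2)) =
      (-t ^ 2 * d (2 * m)) • en (2 * m) + (-(r * t) * d (2 * m + 1)) • en (2 * m + 1) +
        (r ^ 2 * d (2 * m + 2)) • en (2 * m + 2) +
        (-(r * t) * d (2 * m + 3)) • en (2 * m + 3) := by
  refine ext_inner_en fun k ↦ ?_
  simp only [hA, spent_two_mul_add_two_right, inner_add_right, inner_smul_right, inner_en_en]
  grind

-- The weights `r` and `-t` make the components along `e_{2m+2}` and `e_{2m+3}` cancel.
theorem apply_smul_en_add_smul_en
    (hA : ∀ k j, inner ℂ (en k) (A (en j)) = d k * Spent t r k j) (m : ℕ) :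
    A ((r : ℂ) • en (2 * m + 1) + (-t : ℂ) • en (2 * m + 2)) =
      ((r ^ 2 + t ^ 2) * t * d (2 * m)) • en (2 * m) +
        ((r ^ 2 + t ^ 2) * r * d (2 * m + 1)) • en (2 * m + 1) := by
  rw [map_add, map_smul, map_smul, apply_en_two_mul_add_one hA, apply_en_two_mul_add_two hA]
  module

variable {W : Submodule ℂ Hn}

theorem en_one_mem (hA : ∀ k j, inner ℂ (en k) (A (en j)) = d k * Spent t r k j) (ht : t ≠ 0)
    (hd : d 1 ≠ 0) (hW : ∀ x ∈ W, A x ∈ W) (h₀ : en 0 ∈ W) : en 1 ∈ W := by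
  have hA₀ := hW _ h₀
  rw [apply_en_zero hA] at hA₀
  exact mem_of_add_smul_mem (mul_ne_zero (mod_cast ht) hd) (W.smul_mem _ h₀) hA₀

theorem en_two_mul_add_two_mem (hA : ∀ k j, inner ℂ (en k) (A (en j)) = d k * Spent t r k j)
    (ht : t ≠ 0) (hW : ∀ x, A x ∈ W → x ∈ W) {m : ℕ} (h_even : en (2 * m) ∈ W)
    (h_odd : en (2 * m + 1) ∈ W) : en (2 * m + 2) ∈ W := by
  have h_image : A ((r : ℂ) • en (2 * m + 1) + (-t : ℂ) • en (2 * m + 2)) ∈ W := by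
    rw [apply_smul_en_add_smul_en hA]
    exact W.add_mem (W.smul_mem _ h_even) (W.smul_mem _ h_odd)
  exact mem_of_add_smul_mem (neg_ne_zero.2 (mod_cast ht)) (W.smul_mem _ h_odd) (hW _ h_image)

theorem en_two_mul_add_three_mem (hA : ∀ k j, inner ℂ (en k) (A (en j)) = d k * Spent t r k j)
    (ht : t ≠ 0) {m : ℕ} (hd : d (2 * m + 3) ≠ 0) (hW : ∀ x ∈ W, A x ∈ W)
    (h_even : en (2 * m) ∈ W) (h_odd : en (2 * m + 1) ∈ W) (h_next : en (2 * m + 2) ∈ W) :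
    en (2 * m + 3) ∈ W := by
  have h_image := hW _ h_odd
  rw [apply_en_two_mul_add_one hA] at h_image
  have h_coeff : -(t : ℂ) ^ 2 * d (2 * m + 3) ≠ 0 :=
    mul_ne_zero (neg_ne_zero.2 (pow_ne_zero 2 (mod_cast ht))) hd
  exact mem_of_add_smul_mem h_coeff
    (W.add_mem (W.add_mem (W.smul_mem _ h_even) (W.smul_mem _ h_odd)) (W.smul_mem _ h_next))
    h_image

theorem en_mem_of_apply_mem_iff (hA : ∀ k j, inner ℂ (en k) (A (en j)) = d k * Spent t r k j)
    (ht : t ≠ 0) (hd : ∀ m, d (2 * m + 1) ≠ 0) (hW : ∀ x, A x ∈ W ↔ x ∈ W) (h₀ : en 0 ∈ W)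
    (k : ℕ) : en k ∈ W := by
  have h_pair (m : ℕ) : en (2 * m) ∈ W ∧ en (2 * m + 1) ∈ W := by
    induction m with
    | zero => exact ⟨h₀, en_one_mem hA ht (hd 0) (fun x ↦ (hW x).2) h₀⟩
    | succ m ih =>
      obtain ⟨h_even, h_odd⟩ := ih
      have h_next := en_two_mul_add_two_mem hA ht (fun x ↦ (hW x).1) h_even h_odd
      exact ⟨h_next,
        en_two_mul_add_three_mem hA ht (hd (m + 1)) (fun x ↦ (hW x).2) h_even h_odd h_next⟩
  obtain ⟨m, rfl | rfl⟩ := Nat.even_or_odd' k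
  · exact (h_pair m).1
  · exact (h_pair m).2

end WeightedOperator

theorem cyclic_vector_N_general {t r : ℝ} (ht : t ≠ 0) {d : ℕ → ℂ} (U : (Hn →L[ℂ] Hn)ˣ)
    (hU : ∀ k j, inner ℂ (en k) ((U : Hn →L[ℂ] Hn) (en j)) = d k * Spent t r k j) :
    (Submodule.span ℂ
      {x : Hn | ∃ n : ℤ, x = ((U ^ n : (Hn →L[ℂ] Hn)ˣ) : Hn →L[ℂ] Hn) (en 0)}
      ).topologicalClosure = ⊤ := by
  rw [setOf_exists_zpow_apply_eq_orbit]
  set W := Submodule.span ℂ (MulAction.orbit (Subgroup.zpowers U) (en 0))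
  have h_invariant (x : Hn) : (U : Hn →L[ℂ] Hn) x ∈ W ↔ x ∈ W :=
    smul_mem_span_orbit_iff (⟨U, Subgroup.mem_zpowers U⟩ : Subgroup.zpowers U) (en 0) x
  have hd (k : ℕ) : d k ≠ 0 := by
    obtain ⟨j, hj⟩ := exists_inner_apply_en_ne_zero (MulAction.surjective U) (en_ne_zero k)
    exact left_ne_zero_of_mul (hU k j ▸ hj)
  have h₀ : en 0 ∈ W := Submodule.subset_span (MulAction.mem_orbit_self _)
  have h_en : ∀ k, en k ∈ W :=
    en_mem_of_apply_mem_iff (A := (U : Hn →L[ℂ] Hn).toLinearMap) hU ht (fun _ ↦ hd _) h_invariant h₀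
  exact top_unique <| topologicalClosure_span_range_en.ge.trans <|
    Submodule.topologicalClosure_mono <| Submodule.span_le.2 <| Set.range_subset_iff.2 h_en

/-- The vector `e₀` is cyclic for `U⁺_θ = D⁺_θ S⁺`:
the closed span of `{(U⁺_θ)^n e₀ : n ∈ ℤ}` is all of `ℓ²(ℕ₀;ℂ)`. -/
theorem cyclic_vector_N
    (t r : ℝ) (ht0 : 0 < t) (ht1 : t < 1) (hr0 : 0 < r) (hr1 : r < 1)
    (hrt : r^2 + t^2 = 1)
    (θ : ℕ → ℝ)
    (Uu : (Hn →L[ℂ] Hn)ˣ)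
    (hU : ∀ k j : ℕ, inner (𝕜 := ℂ) (en k) ((Uu : Hn →L[ℂ] Hn) (en j)) =
      Complex.exp (-(θ k : ℂ) * Complex.I) * Spent t r k j) :
    (Submodule.span ℂ
      {x : Hn | ∃ n : ℤ, x = ((Uu ^ n : (Hn →L[ℂ] Hn)ˣ) : Hn →L[ℂ] Hn) (en 0)}
      ).topologicalClosure = ⊤ :=
  cyclic_vector_N_general ht0.ne' Uu hU

end
end

section
/- Fix real numbers t, r with 0 < t < 1, 0 < r < 1 and r² + t² = 1, and let I ⊆ ℝ be a nonempty open interval. If V is a linear subspace of ℝ⁴ such that τ(T(θ,η)) V ⊆ V for all θ, η ∈ I, then V = {0} or V = ℝ⁴. -/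
open Complex

noncomputable section

/-- The transfer matrix `T(θ,η) ∈ M₂(ℂ)`. -/
def Tmat (t r θ η : ℝ) : Matrix (Fin 2) (Fin 2) ℂ :=
  !![-Complex.exp (-(η:ℂ) * I),
     ((r/t : ℝ) : ℂ) * (Complex.exp (((θ - η : ℝ) : ℂ) * I) - Complex.exp (-(η:ℂ) * I));
     ((r/t : ℝ) : ℂ) * (1 - Complex.exp (-(η:ℂ) * I)),
     -((1/t^2 : ℝ) : ℂ) * Complex.exp ((θ:ℂ) * I) +
       ((r^2/t^2 : ℝ) : ℂ) * (Complex.exp (((θ - η : ℝ) : ℂ) * I) + 1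
         - Complex.exp (-(η:ℂ) * I))]

/-- The realification map `τ : M₂(ℂ) → M₄(ℝ)` replacing each entry `a` by the 2×2 real block
`Re(a)I + Im(a)J`, where `J = [[0,1],[-1,0]]`. -/
def tauM (M : Matrix (Fin 2) (Fin 2) ℂ) : Matrix (Fin 4) (Fin 4) ℝ :=
  fun i j =>
    let a : ℂ := M ⟨i.val / 2, by have := i.isLt; omega⟩ ⟨j.val / 2, by have := j.isLt; omega⟩
    if i.val % 2 = j.val % 2 then a.re
    else if i.val % 2 = 0 then a.im
    else -a.im

/-!
Identify `ℝ⁴` with `ℂ²` so that `τ(M)` becomes the action of `M`. The complex matrices preserving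
a given real subspace of `ℂ²` form a real algebra `S`. As a function of `e^{-iη}`, and then of
`e^{iθ}`, the matrix `T(θ, η)` is affine, and three distinct points of the unit circle affinely
span `ℂ` over `ℝ`; so `S` contains the coefficients of `T`, with all complex multiples of the
non-constant ones. With `ρ = r / t` these include `z E₂₂` for every `z : ℂ`, `ρ E₂₁ + ρ² E₂₂` and
`ρ E₁₂ + ρ² E₂₂`, which generate `M₂(ℂ)`, and `ℂ²` is a simple `M₂(ℂ)`-module.
-/

open Matrix

section InvariantSubalgebra

variable {R A M : Type*} [CommSemiring R]

/-- The subalgebra of all `a : A` that map the `R`-submodule `W` of an `A`-module into itself. -/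
def invariantSubalgebra [Semiring A] [Algebra R A] [AddCommMonoid M] [Module R M] [Module A M]
    [IsScalarTower R A M] (W : Submodule R M) : Subalgebra R A where
  carrier := {a | ∀ w ∈ W, a • w ∈ W}
  mul_mem' ha hb w hw := by
    rw [mul_smul]
    exact ha _ (hb w hw)
  add_mem' ha hb w hw := by
    rw [add_smul]
    exact W.add_mem (ha w hw) (hb w hw)
  algebraMap_mem' c w hw := by
    rw [algebraMap_smul]
    exact W.smul_mem c hw

theorem eq_bot_or_eq_top_of_invariantSubalgebra_eq_top [Ring A] [Algebra R A] [AddCommGroup M]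
    [Module R M] [Module A M] [IsScalarTower R A M] [IsSimpleModule A M] {W : Submodule R M}
    (hW : invariantSubalgebra (A := A) W = ⊤) : W = ⊥ ∨ W = ⊤ := by
  refine or_iff_not_imp_left.mpr fun hne ↦ ?_
  obtain ⟨v, hv, hv0⟩ := W.ne_bot_iff.mp hne
  refine Submodule.eq_top_iff'.mpr fun w ↦ ?_
  obtain ⟨a, rfl⟩ := IsSimpleModule.toSpanSingleton_surjective A hv0 w
  have ha : a ∈ invariantSubalgebra W := hW ▸ Algebra.mem_top
  exact ha v hv

end InvariantSubalgebra

section Matrix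

variable {n : Type*} [Fintype n] [DecidableEq n]

instance isSimpleModule_matrix {K : Type*} [DivisionRing K] [Nonempty n] :
    IsSimpleModule (Matrix n n K) (n → K) := by
  refine isSimpleModule_iff_toSpanSingleton_surjective.mpr ⟨inferInstance, fun v hv w ↦ ?_⟩
  obtain ⟨i, hi⟩ := Function.ne_iff.mp hv
  refine ⟨vecMulVec w (Pi.single i (v i)⁻¹), ?_⟩
  simp [vecMulVec_mulVec, inv_mul_cancel₀ hi]

theorem subalgebra_matrix_eq_top_of_single_mem {R A : Type*} [CommSemiring R] [Semiring A]
    [Algebra R A] {S : Subalgebra R (Matrix n n A)} (k : n) (hcol : ∀ i, single i k 1 ∈ S)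
    (hrow : ∀ j, single k j 1 ∈ S) (hdiag : ∀ a, single k k a ∈ S) : S = ⊤ := by
  refine eq_top_iff.mpr fun M _ ↦ ?_
  rw [matrix_eq_sum_single M]
  refine sum_mem fun i _ ↦ sum_mem fun j _ ↦ ?_
  have hij : single i j (M i j) = single i k 1 * single k k (M i j) * single k j 1 := by simp
  rw [hij]
  exact mul_mem (mul_mem (hcol i) (hdiag _)) (hrow j)

end Matrix

section Circle

theorem affineSpan_range_circle_eq_top {c : Fin 3 → Circle} (hc : Function.Injective c) :
    affineSpan ℝ (Set.range fun j ↦ (c j : ℂ)) = ⊤ := by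
  have hcosph : EuclideanGeometry.Cospherical (Set.range fun j ↦ (c j : ℂ)) :=
    ⟨0, 1, by simp [Circle.norm_coe]⟩
  have hind : AffineIndependent ℝ fun j ↦ (c j : ℂ) :=
    hcosph.affineIndependent subset_rfl (Circle.coe_injective.comp hc)
  rw [hind.affineSpan_eq_top_iff_card_eq_finrank_add_one]
  simp [Complex.finrank_real_complex]

theorem mem_and_smul_mem_of_affineSpan_eq_top {k A E : Type*} [CommRing k] [Ring A] [Algebra k A]
    [AddCommGroup E] [Module k E] [Module A E] [IsScalarTower k A E] {N : Submodule k E} {p q : E}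
    {s : Set A} (hs : affineSpan k s = ⊤) (h : ∀ a ∈ s, p + a • q ∈ N) :
    p ∈ N ∧ ∀ a : A, a • q ∈ N := by
  let f : A →ᵃ[k] E := AffineMap.const k A p +
    ((LinearMap.toSpanSingleton A E q).restrictScalars k).toAffineMap
  have hspan : affineSpan k s ≤ N.toAffineSubspace.comap f := affineSpan_le.mpr h
  have hmem (a : A) : p + a • q ∈ N := hspan (hs ▸ AffineSubspace.mem_top k A a)
  have hp : p ∈ N := by simpa using hmem 0
  exact ⟨hp, fun a ↦ (N.add_mem_iff_right hp).mp (hmem a)⟩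

theorem mem_and_smul_mem_of_injective_circle {E : Type*} [AddCommGroup E] [Module ℝ E] [Module ℂ E]
    [IsScalarTower ℝ ℂ E] {N : Submodule ℝ E} {p q : E} {c : Fin 3 → Circle}
    (hc : Function.Injective c) (h : ∀ j, p + (c j : ℂ) • q ∈ N) :
    p ∈ N ∧ ∀ z : ℂ, z • q ∈ N :=
  mem_and_smul_mem_of_affineSpan_eq_top (affineSpan_range_circle_eq_top hc)
    (Set.forall_mem_range.mpr h)

theorem exists_mem_Ioo_injective_circleExp {a b : ℝ} (hab : a < b) :
    ∃ φ : Fin 3 → ℝ, (∀ j, φ j ∈ Set.Ioo a b) ∧ Function.Injective fun j ↦ Circle.exp (φ j) := by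
  have hlt : a < min b (a + 1) := lt_min hab (by linarith)
  have hsub : Set.Ioo a (min b (a + 1)) ⊆ Set.Icc a (a + 1) := fun _ hx ↦
    ⟨hx.1.le, hx.2.le.trans (min_le_right _ _)⟩
  have hinj : Set.InjOn Circle.exp (Set.Ioo a (min b (a + 1))) :=
    (Circle.exp_injOn_Icc (by linarith [Real.pi_gt_three])).mono hsub
  let φ := (Set.Ioo_infinite hlt).natEmbedding
  exact ⟨fun j ↦ φ j, fun j ↦ Set.Ioo_subset_Ioo_right (min_le_left _ _) (φ j).2,
    hinj.injective.comp (φ.injective.comp Fin.val_injective)⟩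

end Circle

section TransferMatrix

theorem Tmat_eq_add_exp_smul (t r θ η : ℝ) :
    Tmat t r θ η =
      (single 1 0 (r / t : ℂ) + single 1 1 (r ^ 2 / t ^ 2 : ℂ) +
          (Circle.exp θ : ℂ) • single 1 1 (-(1 / t ^ 2 : ℂ))) +
        (Circle.exp (-η) : ℂ) •
          (!![-1, -(r / t : ℂ); -(r / t : ℂ), -(r ^ 2 / t ^ 2 : ℂ)] +
            (Circle.exp θ : ℂ) • (single 0 1 (r / t : ℂ) + single 1 1 (r ^ 2 / t ^ 2 : ℂ))) := by
  ext i j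
  fin_cases i <;> fin_cases j <;>
    simp [Tmat, sub_mul, Complex.exp_sub, Complex.exp_neg] <;> ring

theorem Tmat_coeff_mem_of_forall_mem {t r : ℝ} {θ η : Fin 3 → ℝ}
    (hθ : Function.Injective fun j ↦ Circle.exp (θ j))
    (hη : Function.Injective fun j ↦ Circle.exp (η j))
    {N : Submodule ℝ (Matrix (Fin 2) (Fin 2) ℂ)} (hN : ∀ i j, Tmat t r (θ i) (η j) ∈ N) :
    single 1 0 (r / t : ℂ) + single 1 1 (r ^ 2 / t ^ 2 : ℂ) ∈ N ∧
      single 0 1 (r / t : ℂ) + single 1 1 (r ^ 2 / t ^ 2 : ℂ) ∈ N ∧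
      ∀ z : ℂ, z • single 1 1 (-(1 / t ^ 2 : ℂ)) ∈ N := by
  have hη' : Function.Injective fun j ↦ Circle.exp (-η j) := by
    simp only [Circle.exp_neg]
    exact inv_injective.comp hη
  have hcoeff (i : Fin 3) := mem_and_smul_mem_of_injective_circle hη' fun j ↦
    Tmat_eq_add_exp_smul t r (θ i) (η j) ▸ hN i j
  obtain ⟨hlower, hcorner⟩ := mem_and_smul_mem_of_injective_circle hθ fun i ↦ (hcoeff i).1
  have hlinear (i : Fin 3) := (hcoeff i).2 1
  simp only [one_smul] at hlinear
  have hupper := (mem_and_smul_mem_of_injective_circle hθ hlinear).2 1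
  rw [one_smul] at hupper
  exact ⟨hlower, hupper, hcorner⟩

theorem subalgebra_eq_top_of_Tmat_mem {t r : ℝ} (ht : t ≠ 0) (hr : r ≠ 0) {θ η : Fin 3 → ℝ}
    (hθ : Function.Injective fun j ↦ Circle.exp (θ j))
    (hη : Function.Injective fun j ↦ Circle.exp (η j))
    {S : Subalgebra ℝ (Matrix (Fin 2) (Fin 2) ℂ)} (hS : ∀ i j, Tmat t r (θ i) (η j) ∈ S) :
    S = ⊤ := by
  obtain ⟨hlower, hupper, hcorner⟩ := Tmat_coeff_mem_of_forall_mem hθ hη (N := S.toSubmodule) hS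
  have ht' : (t : ℂ) ≠ 0 := Complex.ofReal_ne_zero.mpr ht
  have hρ : (r / t : ℂ) ≠ 0 := div_ne_zero (Complex.ofReal_ne_zero.mpr hr) ht'
  have hdiag (z : ℂ) : single 1 1 z ∈ S := by
    have hz : (-(t ^ 2 * z)) • single (1 : Fin 2) (1 : Fin 2) (-(1 / t ^ 2 : ℂ)) =
        single 1 1 z := by
      rw [smul_single, smul_eq_mul]
      congr 1
      field_simp
    exact hz ▸ hcorner _
  have hsingle₁₀ : single 1 0 (r / t : ℂ) ∈ S :=
    (add_mem_cancel_right (hdiag _)).mp hlower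
  have hsingle₀₁ : single 0 1 (r / t : ℂ) ∈ S :=
    (add_mem_cancel_right (hdiag _)).mp hupper
  have hunit₁₀ : single 1 0 1 ∈ S := by
    simpa [inv_mul_cancel₀ hρ, -inv_div] using mul_mem (hdiag (r / t : ℂ)⁻¹) hsingle₁₀
  have hunit₀₁ : single 0 1 1 ∈ S := by
    simpa [mul_inv_cancel₀ hρ, -inv_div] using mul_mem hsingle₀₁ (hdiag (r / t : ℂ)⁻¹)
  exact subalgebra_matrix_eq_top_of_single_mem 1 (Fin.forall_fin_two.mpr ⟨hunit₀₁, hdiag 1⟩)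
    (Fin.forall_fin_two.mpr ⟨hunit₁₀, hdiag 1⟩) hdiag

end TransferMatrix

section Realification

/-- The identification of `ℂ²` with `ℝ⁴` under which `tauM M` is the action of `M`. The sign
convention `J = [[0,1],[-1,0]]` forces `z` to correspond to `(Re z, -Im z)`. -/
def realCoords : (Fin 2 → ℂ) ≃ₗ[ℝ] (Fin 4 → ℝ) where
  toFun z := ![(z 0).re, -(z 0).im, (z 1).re, -(z 1).im]
  invFun v := ![⟨v 0, -v 1⟩, ⟨v 2, -v 3⟩]
  map_add' z w := by
    ext i
    fin_cases i <;> simp [add_comm]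
  map_smul' c z := by
    ext i
    fin_cases i <;> simp
  left_inv z := by
    ext i
    fin_cases i <;> simp
  right_inv v := by
    ext i
    fin_cases i <;> simp

theorem tauM_mulVec_realCoords (M : Matrix (Fin 2) (Fin 2) ℂ) (z : Fin 2 → ℂ) :
    tauM M *ᵥ realCoords z = realCoords (M *ᵥ z) := by
  ext i
  fin_cases i <;> simp [tauM, realCoords, mulVec, dotProduct, Fin.sum_univ_succ] <;> ring

end Realification

theorem tau_irreducible_general {t r : ℝ} (ht : t ≠ 0) (hr : r ≠ 0) {θ η : Fin 3 → ℝ}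
    (hθ : Function.Injective fun j ↦ Circle.exp (θ j))
    (hη : Function.Injective fun j ↦ Circle.exp (η j)) (V : Submodule ℝ (Fin 4 → ℝ))
    (hV : ∀ i j, ∀ v ∈ V, tauM (Tmat t r (θ i) (η j)) *ᵥ v ∈ V) :
    V = ⊥ ∨ V = ⊤ := by
  let W : Submodule ℝ (Fin 2 → ℂ) := V.comap realCoords.toLinearMap
  have hmem (i j : Fin 3) : Tmat t r (θ i) (η j) ∈ invariantSubalgebra W := fun z hz ↦ by
    have hTz := hV i j (realCoords z) hz
    rwa [tauM_mulVec_realCoords] at hTz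
  have hW : W = ⊥ ∨ W = ⊤ := eq_bot_or_eq_top_of_invariantSubalgebra_eq_top
    (subalgebra_eq_top_of_Tmat_mem ht hr hθ hη hmem)
  have hVW : V = W.map realCoords.toLinearMap :=
    (Submodule.map_comap_eq_of_surjective realCoords.surjective V).symm
  rw [hVW]
  exact hW.imp (fun h ↦ by simp [h]) (fun h ↦ by simp [h])

/-- Irreducibility: if a subspace `V ⊆ ℝ⁴` is invariant under
`τ(T(θ,η))` for all `θ, η` in a nonempty open interval `I = (a,b)`, then `V` is trivial. -/
theorem tau_irreducible
    (t r : ℝ) (ht0 : 0 < t) (ht1 : t < 1) (hr0 : 0 < r) (hr1 : r < 1)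
    (hrt : r^2 + t^2 = 1)
    (a b : ℝ) (hab : a < b)
    (V : Submodule ℝ (Fin 4 → ℝ))
    (hV : ∀ θ ∈ Set.Ioo a b, ∀ η ∈ Set.Ioo a b, ∀ v ∈ V,
      (tauM (Tmat t r θ η)).mulVec v ∈ V) :
    V = ⊥ ∨ V = ⊤ := by
  obtain ⟨φ, hφ, hinj⟩ := exists_mem_Ioo_injective_circleExp hab
  exact tau_irreducible_general ht0.ne' hr0.ne' hinj hinj V fun i j ↦ hV _ (hφ i) _ (hφ j)

end
end

section
/- Fix real numbers t, r with 0 < t < 1, 0 < r < 1 and r² + t² = 1, and let θ, η ∈ ℝ satisfy e^{iθ} ≠ e^{iη}. Then the subgroup G(θ,η) of GL(2,ℂ) generated by the four matrices T(θ,θ), T(η,η), T(θ,η), T(η,θ) is unbounded: sup { ‖g‖ : g ∈ G(θ,η) } = ∞; in particular the closure of G(θ,η) in M₂(ℂ) is not compact. -/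
/-!
Put `a = e^{iθ}`, `b = e^{iη}`, `k = r/t`. The triangular factorization of `T(θ,η)` turns the trace
of `g = T(η,θ)⁻¹ T(θ,η)` into `(a/b) (2 - k² (a-b)²/(ab))`, and `(a-b)²/(ab) = -|a-b|²` because `a`
and `b` have modulus one. Hence `|tr g| = 2 + k² |a-b|² > 2`, so `g` has an eigenvalue of modulus
greater than one and its powers are unbounded.
-/

open Complex Matrix

noncomputable section
attribute [local instance] Matrix.normedAddCommGroup

theorem exists_norm_le_of_isCompact_closure_image {α E : Type*} [SeminormedAddCommGroup E]
    {f : α → E} {s : Set α} (hs : IsCompact (closure (f '' s))) :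
    ∃ R : ℝ, ∀ a ∈ s, ‖f a‖ ≤ R := by
  obtain ⟨R, hR⟩ := hs.isBounded.exists_norm_le
  exact ⟨R, fun a ha => hR _ (subset_closure (Set.mem_image_of_mem f ha))⟩

section Trace

variable {n K : Type*} [Fintype n] [DecidableEq n] [NormedField K]
  {M : Matrix n n K} {μ : K} {R : ℝ}

theorem norm_le_card_mul_norm_of_mem_spectrum (hμ : μ ∈ spectrum K M) :
    ‖μ‖ ≤ Fintype.card n * ‖M‖ := by
  rw [← Matrix.spectrum_toLin', ← Module.End.hasEigenvalue_iff_mem_spectrum] at hμ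
  obtain ⟨i, hi⟩ := eigenvalue_mem_ball hμ
  rw [mem_closedBall_iff_norm'] at hi
  calc ‖μ‖ ≤ ‖M i i‖ + ‖M i i - μ‖ := norm_le_norm_add_norm_sub _ _
    _ ≤ ‖M i i‖ + ∑ j ∈ Finset.univ.erase i, ‖M i j‖ := by gcongr
    _ = ∑ j, ‖M i j‖ := Finset.add_sum_erase _ (‖M i ·‖) (Finset.mem_univ i)
    _ ≤ ∑ _j : n, ‖M‖ := by gcongr; exact norm_entry_le_entrywise_sup_norm M
    _ = Fintype.card n * ‖M‖ := by simp

theorem norm_le_one_of_mem_spectrum_of_norm_pow_le (hR : ∀ k : ℕ, ‖M ^ k‖ ≤ R)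
    (hμ : μ ∈ spectrum K M) : ‖μ‖ ≤ 1 := by
  by_contra! hlt
  obtain ⟨k, hk⟩ := pow_unbounded_of_one_lt (Fintype.card n * R) hlt
  refine hk.not_ge ?_
  calc ‖μ‖ ^ k = ‖μ ^ k‖ := (norm_pow μ k).symm
    _ ≤ Fintype.card n * ‖M ^ k‖ :=
      norm_le_card_mul_norm_of_mem_spectrum (spectrum.pow_mem_pow M k hμ)
    _ ≤ Fintype.card n * R := by gcongr; exact hR k

theorem norm_trace_le_card_of_norm_pow_le [IsAlgClosed K] (hR : ∀ k : ℕ, ‖M ^ k‖ ≤ R) :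
    ‖M.trace‖ ≤ Fintype.card n := by
  have hroots : ∀ x ∈ M.charpoly.roots.map (‖·‖), x ≤ 1 := by
    intro x hx
    obtain ⟨μ, hμ, rfl⟩ := Multiset.mem_map.1 hx
    exact norm_le_one_of_mem_spectrum_of_norm_pow_le hR
      (mem_spectrum_iff_isRoot_charpoly.2 (Polynomial.isRoot_of_mem_roots hμ))
  calc ‖M.trace‖ = ‖M.charpoly.roots.sum‖ := by rw [trace_eq_sum_roots_charpoly]
    _ ≤ (M.charpoly.roots.map (‖·‖)).sum := norm_multiset_sum_le _
    _ ≤ M.charpoly.roots.card := by simpa using Multiset.sum_le_card_nsmul _ 1 hroots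
    _ ≤ M.charpoly.natDegree := mod_cast M.charpoly.card_roots'
    _ = Fintype.card n := by rw [charpoly_natDegree_eq_dim]

theorem norm_trace_le_card_of_mem_subgroup [IsAlgClosed K] {H : Subgroup (GL n K)}
    (hR : ∀ g ∈ H, ‖(g : Matrix n n K)‖ ≤ R) {g : GL n K} (hg : g ∈ H) :
    ‖(g : Matrix n n K).trace‖ ≤ Fintype.card n :=
  norm_trace_le_card_of_norm_pow_le fun k => by
    simpa only [Units.val_pow_eq_pow_val] using hR (g ^ k) (pow_mem hg k)

end Trace

section LDU

variable {K : Type*} [Field K]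

/-- The transfer matrix of coupling `k` and phases `a`, `b`, in lower-diagonal-upper form; the
matrix `T(θ,η)` is the case `k = r/t`, `a = e^{iθ}`, `b = e^{iη}`. -/
def lduTransfer (k a b : K) : Matrix (Fin 2) (Fin 2) K :=
  !![1, 0; k * (1 - b), 1] * !![-b⁻¹, 0; 0, -a] * !![1, k * (1 - a); 0, 1]

theorem det_lduTransfer (k a b : K) : (lduTransfer k a b).det = a / b := by
  simp only [lduTransfer, det_mul, det_fin_two_of]
  ring

theorem lduTransfer_eq (k a : K) {b : K} (hb : b ≠ 0) :
    lduTransfer k a b =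
      !![-b⁻¹, k * (a * b⁻¹ - b⁻¹);
         k * (1 - b⁻¹), -(1 + k ^ 2) * a + k ^ 2 * (a * b⁻¹ + 1 - b⁻¹)] := by
  ext i j
  fin_cases i <;> fin_cases j <;>
    simp only [lduTransfer, mul_fin_two, of_apply, cons_val', cons_val_zero, cons_val_one,
      Fin.zero_eta, Fin.mk_one, cons_val_fin_one] <;>
    field_simp <;> ring

theorem trace_inv_lduTransfer_mul_lduTransfer (k : K) {a b : K} (ha : a ≠ 0) (hb : b ≠ 0) :
    ((lduTransfer k b a)⁻¹ * lduTransfer k a b).trace =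
      a / b * (2 - k ^ 2 * ((a - b) ^ 2 / (a * b))) := by
  rw [Matrix.inv_def, det_lduTransfer, Ring.inverse_eq_inv', inv_div, smul_mul, trace_smul,
    smul_eq_mul]
  congr 1
  simp only [lduTransfer, mul_fin_two, adjugate_fin_two_of, trace_fin_two_of]
  field_simp
  ring

end LDU

theorem sub_sq_div_mul_of_norm_eq_one {a b : ℂ} (ha : ‖a‖ = 1) (hb : ‖b‖ = 1) :
    (a - b) ^ 2 / (a * b) = -(‖a - b‖ ^ 2 : ℝ) := by
  have ha0 : a ≠ 0 := norm_ne_zero_iff.1 (by simp [ha])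
  have hb0 : b ≠ 0 := norm_ne_zero_iff.1 (by simp [hb])
  rw [ofReal_pow, ← mul_conj', map_sub, ← inv_eq_conj ha, ← inv_eq_conj hb]
  field_simp
  ring

theorem norm_trace_inv_lduTransfer_mul_lduTransfer (k : ℝ) {a b : ℂ} (ha : ‖a‖ = 1)
    (hb : ‖b‖ = 1) :
    ‖((lduTransfer (k : ℂ) b a)⁻¹ * lduTransfer (k : ℂ) a b).trace‖ =
      2 + k ^ 2 * ‖a - b‖ ^ 2 := by
  have ha0 : a ≠ 0 := norm_ne_zero_iff.1 (by simp [ha])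
  have hb0 : b ≠ 0 := norm_ne_zero_iff.1 (by simp [hb])
  have hreal : (2 - k ^ 2 * ((a - b) ^ 2 / (a * b)) : ℂ) = (2 + k ^ 2 * ‖a - b‖ ^ 2 : ℝ) := by
    rw [sub_sq_div_mul_of_norm_eq_one ha hb]
    push_cast
    ring
  rw [trace_inv_lduTransfer_mul_lduTransfer _ ha0 hb0, hreal, norm_mul, norm_div, ha, hb, div_one,
    one_mul, norm_real, Real.norm_of_nonneg (by positivity)]

theorem Tmat_eq_lduTransfer {t r : ℝ} (ht : t ≠ 0) (hrt : r ^ 2 + t ^ 2 = 1) (θ η : ℝ) :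
    Tmat t r θ η = lduTransfer ((r / t : ℝ) : ℂ) (exp (θ * I)) (exp (η * I)) := by
  have hη : exp (-(η : ℂ) * I) = (exp (η * I))⁻¹ := by rw [neg_mul, exp_neg]
  have hθη : exp (((θ - η : ℝ) : ℂ) * I) = exp (θ * I) * (exp (η * I))⁻¹ := by
    rw [ofReal_sub, sub_mul, exp_sub, div_eq_mul_inv]
  have ht2 : 1 / t ^ 2 = 1 + (r / t) ^ 2 := by
    field_simp
    linarith
  rw [Tmat, lduTransfer_eq _ _ (exp_ne_zero _), hη, hθη, ht2, ← div_pow, ofReal_add, ofReal_one,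
    ofReal_pow]

theorem generated_group_noncompact_general {t r : ℝ} (ht : t ≠ 0) (hr : r ≠ 0)
    (hrt : r ^ 2 + t ^ 2 = 1) {θ η : ℝ} (hne : exp (θ * I) ≠ exp (η * I))
    {C D : GL (Fin 2) ℂ} (hC : (C : Matrix (Fin 2) (Fin 2) ℂ) = Tmat t r θ η)
    (hD : (D : Matrix (Fin 2) (Fin 2) ℂ) = Tmat t r η θ)
    {H : Subgroup (GL (Fin 2) ℂ)} (hH : D⁻¹ * C ∈ H) :
    (¬ ∃ R : ℝ, ∀ g ∈ H, ‖(g : Matrix (Fin 2) (Fin 2) ℂ)‖ ≤ R) ∧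
    ¬ IsCompact (closure
      ((fun g : GL (Fin 2) ℂ => (g : Matrix (Fin 2) (Fin 2) ℂ)) ''
        (H : Set (GL (Fin 2) ℂ)))) := by
  have hunbdd : ¬ ∃ R : ℝ, ∀ g ∈ H, ‖(g : Matrix (Fin 2) (Fin 2) ℂ)‖ ≤ R := by
    rintro ⟨R, hR⟩
    have htrace_le : ‖((D⁻¹ * C : GL (Fin 2) ℂ) : Matrix (Fin 2) (Fin 2) ℂ).trace‖ ≤ 2 := by
      simpa using norm_trace_le_card_of_mem_subgroup hR hH
    rw [Units.val_mul, coe_units_inv, hC, hD, Tmat_eq_lduTransfer ht hrt,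
      Tmat_eq_lduTransfer ht hrt, norm_trace_inv_lduTransfer_mul_lduTransfer _
        (norm_exp_ofReal_mul_I θ) (norm_exp_ofReal_mul_I η)] at htrace_le
    have hpos : 0 < (r / t) ^ 2 * ‖exp (θ * I) - exp (η * I)‖ ^ 2 := by
      have hdist := norm_pos_iff.2 (sub_ne_zero.2 hne)
      positivity
    linarith
  exact ⟨hunbdd, fun hcompact => hunbdd (exists_norm_le_of_isCompact_closure_image hcompact)⟩

/-- If `e^{iθ} ≠ e^{iη}`, the subgroup of `GL(2,ℂ)` generated by
`T(θ,θ), T(η,η), T(θ,η), T(η,θ)` is unbounded in norm; in particular its closure in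
`M₂(ℂ)` is not compact. -/
theorem generated_group_noncompact
    (t r : ℝ) (ht0 : 0 < t) (ht1 : t < 1) (hr0 : 0 < r) (hr1 : r < 1)
    (hrt : r^2 + t^2 = 1)
    (θ η : ℝ) (hne : Complex.exp ((θ:ℂ) * I) ≠ Complex.exp ((η:ℂ) * I))
    (A B C D : GL (Fin 2) ℂ)
    (hA : (A : Matrix (Fin 2) (Fin 2) ℂ) = Tmat t r θ θ)
    (hB : (B : Matrix (Fin 2) (Fin 2) ℂ) = Tmat t r η η)
    (hC : (C : Matrix (Fin 2) (Fin 2) ℂ) = Tmat t r θ η)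
    (hD : (D : Matrix (Fin 2) (Fin 2) ℂ) = Tmat t r η θ) :
    (¬ ∃ R : ℝ, ∀ g ∈ Subgroup.closure {A, B, C, D},
        ‖(g : Matrix (Fin 2) (Fin 2) ℂ)‖ ≤ R) ∧
    ¬ IsCompact (closure
      ((fun g : GL (Fin 2) ℂ => (g : Matrix (Fin 2) (Fin 2) ℂ)) ''
        (Subgroup.closure {A, B, C, D} : Set (GL (Fin 2) ℂ)))) := by
  exact generated_group_noncompact_general ht0.ne' hr0.ne' hrt hne hC hD
    (mul_mem (inv_mem (Subgroup.subset_closure (by simp))) (Subgroup.subset_closure (by simp)))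

end
end

section
/- Fix real numbers t, r with 0 < t < 1, 0 < r < 1 and r² + t² = 1, a sequence of phases θ = (θ_k)_{k∈ℤ}, and α ∈ ℝ. A sequence c : ℤ → ℂ satisfies the formal eigenvalue equations e^{−iθ_k} (S c)_k = e^{iα} c_k for all k ∈ ℤ (where (S c)_k denotes the finite sum Σ_j ⟨e_k, S e_j⟩ c_j given by the band matrix S) if and only if for every k ∈ ℤ the vector (c_{2k+1}, c_{2k+2})ᵀ equals T(θ_{2k} + α, θ_{2k+1} + α) applied to (c_{2k−1}, c_{2k})ᵀ. -/
open Complex Matrix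

noncomputable section

/-- The formal action of the band matrix `S` on an arbitrary sequence `c : ℤ → ℂ`:
`(S c)_k = Σ_j ⟨e_k, S e_j⟩ c_j`, a finite sum since `⟨e_k, S e_j⟩ = 0` for `|j - k| > 2`. -/
def Sact (t r : ℝ) (c : ℤ → ℂ) (k : ℤ) : ℂ :=
  ∑ j ∈ Finset.Icc (k - 2) (k + 2), Sent t r k j * c j

/-!
The operator `S` is a product of two block-diagonal rotations, one pairing the sites `2k - 1, 2k`
and the other the sites `2k, 2k + 1`. With `p = t c_{2k-1} + r c_{2k}` and
`q = r c_{2k+1} - t c_{2k+2}`, the equations at the sites `2k` and `2k + 1` say that the rotation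
`(r, t; -t, r)` sends `(p, q)` to `(e^{i(θ_{2k} + α)} c_{2k}, e^{i(θ_{2k+1} + α)} c_{2k+1})`.
Inverting this rotation leaves a triangular system: the first equation gives `c_{2k+1}` in terms
of `c_{2k-1}` and `c_{2k}`, and the second then gives `c_{2k+2}`.
-/

theorem forall_int_iff_forall_two_mul_and_two_mul_add_one {P : ℤ → Prop} :
    (∀ k, P k) ↔ ∀ k, P (2 * k) ∧ P (2 * k + 1) := by
  refine ⟨fun h k => ⟨h _, h _⟩, fun h k => ?_⟩
  obtain ⟨m, rfl | rfl⟩ := Int.even_or_odd' k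
  exacts [(h m).1, (h m).2]

theorem sum_Icc_sub_two_add_two {M : Type*} [AddCommMonoid M] (f : ℤ → M) (k : ℤ) :
    ∑ j ∈ Finset.Icc (k - 2) (k + 2), f j =
      f (k - 2) + f (k - 1) + f k + f (k + 1) + f (k + 2) := by
  have hIcc : Finset.Icc (k - 2) (k + 2) = {k - 2, k - 1, k, k + 1, k + 2} := by
    ext j
    simp only [Finset.mem_Icc, Finset.mem_insert, Finset.mem_singleton]
    omega
  rw [hIcc]
  repeat rw [Finset.sum_insert (by simp only [Finset.mem_insert, Finset.mem_singleton]; omega)]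
  simp only [Finset.sum_singleton, add_assoc]

theorem rotation_eq_iff {R : Type*} [CommRing R] {r t : R} (h : r ^ 2 + t ^ 2 = 1)
    {p q m n : R} :
    (r * p + t * q = m ∧ -t * p + r * q = n) ↔ (p = r * m - t * n ∧ q = t * m + r * n) := by
  constructor
  · rintro ⟨rfl, rfl⟩
    exact ⟨by linear_combination -p * h, by linear_combination -q * h⟩
  · rintro ⟨rfl, rfl⟩
    exact ⟨by linear_combination m * h, by linear_combination n * h⟩

theorem exp_neg_mul_eq_exp_mul_iff {a b s z : ℂ} :
    exp (-a) * s = exp b * z ↔ s = exp (a + b) * z := by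
  rw [exp_neg, inv_mul_eq_iff_eq_mul₀ (exp_ne_zero a), exp_add, mul_assoc]

theorem triangular_solution_iff {K : Type*} [Field K] {t r u v a b x y : K} (ht : t ≠ 0)
    (hv : v ≠ 0) (h : r ^ 2 + t ^ 2 = 1) :
    (t * a + r * b = r * (u * b) - t * (v * x) ∧ r * x - t * y = t * (u * b) + r * (v * x)) ↔
      (x = -v⁻¹ * a + r / t * (u / v - v⁻¹) * b ∧
        y = r / t * (1 - v⁻¹) * a +
          (-(1 / t ^ 2) * u + r ^ 2 / t ^ 2 * (u / v + 1 - v⁻¹)) * b) := by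
  have fst_iff : t * a + r * b = r * (u * b) - t * (v * x) ↔
      x = -v⁻¹ * a + r / t * (u / v - v⁻¹) * b := by
    field_simp
    constructor <;> intro hx <;> linear_combination hx
  have snd_iff : r * x - t * y = t * (u * b) + r * (v * x) ↔
      y = r / t * (1 - v) * x - u * b := by
    field_simp
    constructor <;> intro hy <;> linear_combination -hy
  rw [fst_iff, snd_iff]
  refine and_congr_right fun hx => ?_
  have hxy : r / t * (1 - v) * x - u * b = r / t * (1 - v⁻¹) * a +
      (-(1 / t ^ 2) * u + r ^ 2 / t ^ 2 * (u / v + 1 - v⁻¹)) * b := by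
    rw [hx]
    field_simp
    linear_combination -v * u * b * h
  rw [hxy]

theorem Sact_of_even (t r : ℝ) (c : ℤ → ℂ) {k : ℤ} (hk : Even k) :
    Sact t r c k = r * (t * c (k - 1) + r * c k) + t * (r * c (k + 1) - t * c (k + 2)) := by
  obtain ⟨h₁, h₂, h₃, h₄, h₅⟩ : Sent t r k (k - 2) = 0 ∧ Sent t r k (k - 1) = r * t ∧
      Sent t r k k = r ^ 2 ∧ Sent t r k (k + 1) = r * t ∧ Sent t r k (k + 2) = -t ^ 2 := by
    simp [Sent, sub_eq_add_neg, Int.even_iff.mp hk]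
  rw [Sact, sum_Icc_sub_two_add_two, h₁, h₂, h₃, h₄, h₅]
  ring

theorem Sact_of_odd (t r : ℝ) (c : ℤ → ℂ) {k : ℤ} (hk : Odd k) :
    Sact t r c k = -t * (t * c (k - 2) + r * c (k - 1)) + r * (r * c k - t * c (k + 1)) := by
  obtain ⟨h₁, h₂, h₃, h₄, h₅⟩ : Sent t r k (k - 2) = -t ^ 2 ∧ Sent t r k (k - 1) = -(r * t) ∧
      Sent t r k k = r ^ 2 ∧ Sent t r k (k + 1) = -(r * t) ∧ Sent t r k (k + 2) = 0 := by
    simp [Sent, sub_eq_add_neg, Int.odd_iff.mp hk]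
  rw [Sact, sum_Icc_sub_two_add_two, h₁, h₂, h₃, h₄, h₅]
  ring

theorem eq_Tmat_mulVec_iff {t r : ℝ} (ht : t ≠ 0) (hrt : r ^ 2 + t ^ 2 = 1) (θ η : ℝ)
    (a b x y : ℂ) :
    ![x, y] = Tmat t r θ η *ᵥ ![a, b] ↔
      t * a + r * b = r * (exp (θ * I) * b) - t * (exp (η * I) * x) ∧
        r * x - t * y = t * (exp (θ * I) * b) + r * (exp (η * I) * x) := by
  have hrt' : (r : ℂ) ^ 2 + (t : ℂ) ^ 2 = 1 := mod_cast hrt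
  rw [triangular_solution_iff (ofReal_ne_zero.mpr ht) (exp_ne_zero _) hrt']
  simp [Tmat, funext_iff, Fin.forall_fin_two, sub_mul, exp_sub, exp_neg,
    mul_comm a, mul_comm b]

theorem transfer_matrix_equivalence_general {t r : ℝ} (ht : t ≠ 0) (hrt : r ^ 2 + t ^ 2 = 1)
    (θ : ℤ → ℝ) (α : ℝ) (c : ℤ → ℂ) (k : ℤ) :
    (exp (-(θ (2 * k) : ℂ) * I) * Sact t r c (2 * k) = exp (α * I) * c (2 * k) ∧
      exp (-(θ (2 * k + 1) : ℂ) * I) * Sact t r c (2 * k + 1) =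
        exp (α * I) * c (2 * k + 1)) ↔
      ![c (2 * k + 1), c (2 * k + 2)] =
        Tmat t r (θ (2 * k) + α) (θ (2 * k + 1) + α) *ᵥ ![c (2 * k - 1), c (2 * k)] := by
  have hrt' : (r : ℂ) ^ 2 + (t : ℂ) ^ 2 = 1 := mod_cast hrt
  have hsub : 2 * k + 1 - 2 = 2 * k - 1 := by ring
  have hadd : 2 * k + 1 + 1 = 2 * k + 2 := by ring
  simp only [neg_mul, exp_neg_mul_eq_exp_mul_iff, ← add_mul, ← ofReal_add]
  rw [Sact_of_even t r c (even_two_mul k), Sact_of_odd t r c (odd_two_mul_add_one k), hsub, hadd,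
    add_sub_cancel_right, rotation_eq_iff hrt', eq_Tmat_mulVec_iff ht hrt]

/-- A sequence `c` solves the formal eigenvalue equations
`e^{-iθ_k}(Sc)_k = e^{iα} c_k` for all `k ∈ ℤ` iff the transfer matrix relations
`(c_{2k+1}, c_{2k+2})ᵀ = T(θ_{2k}+α, θ_{2k+1}+α)(c_{2k-1}, c_{2k})ᵀ` hold for all `k ∈ ℤ`. -/
theorem transfer_matrix_equivalence
    (t r : ℝ) (ht0 : 0 < t) (ht1 : t < 1) (hr0 : 0 < r) (hr1 : r < 1)
    (hrt : r^2 + t^2 = 1)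
    (θ : ℤ → ℝ) (α : ℝ) (c : ℤ → ℂ) :
    (∀ k : ℤ, Complex.exp (-(θ k : ℂ) * I) * Sact t r c k =
      Complex.exp ((α : ℂ) * I) * c k) ↔
    (∀ k : ℤ, ![c (2*k+1), c (2*k+2)] =
      (Tmat t r (θ (2*k) + α) (θ (2*k+1) + α)).mulVec ![c (2*k-1), c (2*k)]) := by
  rw [forall_int_iff_forall_two_mul_and_two_mul_add_one]
  exact forall_congr' (transfer_matrix_equivalence_general ht0.ne' hrt θ α c)

end
end
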